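/- arXiv:math/0409520 — 3 statements merged into one kernel-verified Lean document; each statement's English description precedes it below -/
import Mathlib

section
/- Let G be a finite-index subgroup of GL(2,ℤ) with −I ∈ G and P = GL(2,ℤ)/G the finite left coset space. For all irrational x, y ∈ (0,1) and all s, t ∈ P, the following are equivalent: (i) there exists γ ∈ GL(2,ℤ) with y = γ·x under the Möbius action and t = γ·s under left multiplication on cosets; (ii) there exist integers n, m ≥ 0 with Tⁿ(x,s) = Tᵐ(y,t), where T is the generalized Gauss shift. In other words, GL(2,ℤ)-orbits on (irrationals in (0,1)) × P coincide with the shift-tail equivalence classes of the generalized continued fraction shift. -/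
set_option synthInstance.maxHeartbeats 1000000
set_option maxHeartbeats 1000000

open Filter MeasureTheory

noncomputable def gaussMap (x : ℝ) : ℝ := 1 / x - ⌊1 / x⌋

noncomputable def cfDigit (x : ℝ) (n : ℕ) : ℤ := ⌊1 / (gaussMap^[n] x)⌋

noncomputable def cfP (x : ℝ) : ℕ → ℤ
  | 0 => 0
  | 1 => 1
  | n + 2 => cfDigit x (n + 1) * cfP x (n + 1) + cfP x n

noncomputable def cfQ (x : ℝ) : ℕ → ℤ
  | 0 => 1
  | 1 => cfDigit x 0
  | n + 2 => cfDigit x (n + 1) * cfQ x (n + 1) + cfQ x n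

abbrev GL2 := Matrix.GeneralLinearGroup (Fin 2) ℤ

def shiftMat (k : ℤ) : GL2 :=
  ⟨!![-k, 1; 1, 0], !![0, 1; 1, k],
    by ext i j; fin_cases i <;> fin_cases j <;>
      simp [Matrix.mul_apply, Fin.sum_univ_two, Matrix.one_apply],
    by ext i j; fin_cases i <;> fin_cases j <;>
      simp [Matrix.mul_apply, Fin.sum_univ_two, Matrix.one_apply]⟩

def cfMat (k : ℤ) : GL2 :=
  ⟨!![0, 1; 1, k], !![-k, 1; 1, 0],
    by ext i j; fin_cases i <;> fin_cases j <;>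
      simp [Matrix.mul_apply, Fin.sum_univ_two, Matrix.one_apply],
    by ext i j; fin_cases i <;> fin_cases j <;>
      simp [Matrix.mul_apply, Fin.sum_univ_two, Matrix.one_apply]⟩

def negOneGL : GL2 :=
  ⟨-1, -1, by simp, by simp⟩

noncomputable def moebius (γ : GL2) (x : ℝ) : ℝ :=
  (((γ : Matrix (Fin 2) (Fin 2) ℤ) 0 0 : ℝ) * x + ((γ : Matrix (Fin 2) (Fin 2) ℤ) 0 1 : ℝ)) /
    (((γ : Matrix (Fin 2) (Fin 2) ℤ) 1 0 : ℝ) * x + ((γ : Matrix (Fin 2) (Fin 2) ℤ) 1 1 : ℝ))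

noncomputable def gaussShiftP (G : Subgroup GL2) :
    ℝ × (GL2 ⧸ G) → ℝ × (GL2 ⧸ G) :=
  fun p => (gaussMap p.1, shiftMat ⌊1 / p.1⌋ • p.2)

/-!
On irrational numbers the Gauss shift `T` acts at each point by an element of `GL(2,ℤ)`, so
tail-equivalent points lie in one orbit. Conversely it is enough to see that two generators of
`GL(2,ℤ)` preserve tail classes: the shears `x ↦ x / (k x + 1)`, which add `k` to `1 / x`, and the
inversion `x ↦ 1 / x`. The shears do not change `T p` at all, and `T` undoes the inversion of a
point of `(0, 1)`; this settles the inversion of positive numbers. Negative numbers are carried to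
positive ones by `x ↦ -x`, which for `x > 1` is, up to the sign of the matrix, a composition of
shears and inversions of positive numbers. The sign is harmless because `-1` acts trivially.
-/

section TailEquivalence

variable {α : Type*}

/-- Tail equivalence of a self-map `f`: two points are related when their forward orbits under `f`
eventually merge, possibly after different numbers of steps. -/
def tailSetoid (f : α → α) : Setoid α where
  r a b := ∃ n m : ℕ, f^[n] a = f^[m] b
  iseqv :=
    { refl := fun _ => ⟨0, 0, rfl⟩
      symm := fun ⟨n, m, h⟩ => ⟨m, n, h.symm⟩
      trans := by
        rintro a b c ⟨n, m, hab⟩ ⟨k, l, hbc⟩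
        refine ⟨k + n, m + l, ?_⟩
        rw [Function.iterate_add_apply, hab, Function.iterate_add_apply f m, ← hbc,
          ← Function.iterate_add_apply, ← Function.iterate_add_apply, add_comm] }

theorem tailSetoid_apply_self (f : α → α) (a : α) : tailSetoid f (f a) a :=
  ⟨0, 1, rfl⟩

theorem tailSetoid_of_apply_eq {f : α → α} {a b : α} (h : f a = f b) : tailSetoid f a b :=
  ⟨1, 1, h⟩

theorem tailSetoid_le {f : α → α} {r : Setoid α} (h : ∀ a, r (f a) a) : tailSetoid f ≤ r := by
  have iterate_rel (n : ℕ) (a : α) : r (f^[n] a) a := by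
    induction n with
    | zero => exact r.refl a
    | succ n ih =>
      rw [Function.iterate_succ_apply']
      exact r.trans (h _) ih
  rintro a b ⟨n, m, hab⟩
  exact r.trans (r.symm (iterate_rel n a)) (hab ▸ iterate_rel m b)

end TailEquivalence

theorem orbitRel_le_of_closure_eq_top {M α : Type*} [Group M] [MulAction M α] {S : Set M}
    (hS : Subgroup.closure S = ⊤) {r : Setoid α} (h : ∀ g ∈ S, ∀ a : α, r (g • a) a) :
    MulAction.orbitRel M α ≤ r := by
  suffices ∀ g ∈ Subgroup.closure S, ∀ a : α, r (g • a) a by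
    rintro _ a ⟨g, rfl⟩
    exact this g (hS ▸ Subgroup.mem_top g) a
  intro g hg a
  induction hg using Subgroup.closure_induction generalizing a with
  | mem g hg => exact h g hg a
  | one => simpa only [one_smul] using r.refl a
  | mul g₁ g₂ _ _ ih₁ ih₂ => simpa only [mul_smul] using r.trans (ih₁ (g₂ • a)) (ih₂ a)
  | inv g _ ih => simpa only [smul_inv_smul] using r.symm (ih (g⁻¹ • a))

/-- The lower unitriangular matrix acting on `1 / x` as the translation by `k`. -/
def lowerShear (k : ℤ) : GL2 :=
  ⟨!![1, 0; k, 1], !![1, 0; -k, 1], by simp [Matrix.one_fin_two], by simp [Matrix.one_fin_two]⟩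

/-- The matrix of the inversion `x ↦ 1 / x`. -/
def inversion : GL2 :=
  ⟨!![0, 1; 1, 0], !![0, 1; 1, 0], by simp [Matrix.one_fin_two], by simp [Matrix.one_fin_two]⟩

/-- The matrix of the reflection `x ↦ -x`. -/
def reflection : GL2 :=
  ⟨!![-1, 0; 0, 1], !![-1, 0; 0, 1], by simp [Matrix.one_fin_two], by simp [Matrix.one_fin_two]⟩

theorem inversion_mul_self : inversion * inversion = 1 :=
  Units.ext inversion.val_inv

theorem toGL_mem_closure_lowerShear_inversion (g : Matrix.SpecialLinearGroup (Fin 2) ℤ) :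
    Matrix.SpecialLinearGroup.toGL g ∈ Subgroup.closure {lowerShear 1, inversion} := by
  set H : Subgroup GL2 := Subgroup.closure {lowerShear 1, inversion}
  have hL : lowerShear 1 ∈ H := Subgroup.subset_closure (by simp)
  have hJ : inversion ∈ H := Subgroup.subset_closure (by simp)
  have hT : Matrix.SpecialLinearGroup.toGL ModularGroup.T =
      inversion * lowerShear 1 * inversion :=
    Units.ext (ModularGroup.coe_T.trans (by simp [inversion, lowerShear]))
  have hS : Matrix.SpecialLinearGroup.toGL ModularGroup.S =
      inversion * (lowerShear 1)⁻¹ * inversion * lowerShear 1 * inversion *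
        (lowerShear 1)⁻¹ * inversion :=
    Units.ext (ModularGroup.coe_S.trans (by simp [inversion, lowerShear]))
  suffices ⊤ ≤ H.comap Matrix.SpecialLinearGroup.toGL from this (Subgroup.mem_top g)
  rw [← SpecialLinearGroup.SL2Z_generators, Subgroup.closure_le]
  rintro _ (rfl | rfl)
  · rw [SetLike.mem_coe, Subgroup.mem_comap, hS]
    apply_rules [H.mul_mem, H.inv_mem]
  · rw [SetLike.mem_coe, Subgroup.mem_comap, hT]
    apply_rules [H.mul_mem]

theorem closure_lowerShear_inversion :
    Subgroup.closure ({lowerShear 1, inversion} : Set GL2) = ⊤ := by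
  have mem_of_det_eq_one (γ : GL2) (h : γ.val.det = 1) :
      γ ∈ Subgroup.closure {lowerShear 1, inversion} := by
    have hγ : γ = Matrix.SpecialLinearGroup.toGL ⟨γ.val, h⟩ := Units.ext rfl
    exact hγ ▸ toGL_mem_closure_lowerShear_inversion _
  refine (Subgroup.eq_top_iff' _).2 fun γ => ?_
  rcases Int.isUnit_iff.1 ((Matrix.isUnit_iff_isUnit_det _).1 γ.isUnit) with h | h
  · exact mem_of_det_eq_one γ h
  · have hJ : inversion ∈ Subgroup.closure {lowerShear 1, inversion} :=
      Subgroup.subset_closure (by simp)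
    refine (Subgroup.mul_mem_cancel_left _ hJ).1 (mem_of_det_eq_one _ ?_)
    rw [Units.val_mul, Matrix.det_mul, h]
    simp [inversion, Matrix.det_fin_two]

theorem eq_zero_of_mul_irrational_add_eq_zero {x : ℝ} (hx : Irrational x) {a b : ℚ}
    (h : a * x + b = 0) : a = 0 ∧ b = 0 := by
  have ha : a = 0 := by
    by_contra ha
    exact ((hx.ratCast_mul ha).add_ratCast b).ne_zero h
  subst ha
  exact ⟨rfl, by simpa using h⟩

section Moebius

variable (γ δ : GL2) {x : ℝ} (hx : Irrational x)

theorem det_GL2_ne_zero : γ 0 0 * γ 1 1 - γ 0 1 * γ 1 0 ≠ 0 := by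
  rw [← Matrix.det_fin_two]
  exact ((Matrix.isUnit_iff_isUnit_det _).1 γ.isUnit).ne_zero

include hx

theorem moebius_denom_ne_zero : (γ 1 0 : ℝ) * x + γ 1 1 ≠ 0 := by
  intro h
  obtain ⟨hc, hd⟩ := eq_zero_of_mul_irrational_add_eq_zero (a := γ 1 0) (b := γ 1 1) hx (mod_cast h)
  apply det_GL2_ne_zero γ
  rw [Int.cast_eq_zero.1 hc, Int.cast_eq_zero.1 hd]
  ring

theorem irrational_moebius : Irrational (moebius γ x) := by
  rintro ⟨q, hq⟩
  rw [moebius, eq_div_iff (moebius_denom_ne_zero γ hx)] at hq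
  obtain ⟨h₁, h₀⟩ := eq_zero_of_mul_irrational_add_eq_zero (a := q * γ 1 0 - γ 0 0)
    (b := q * γ 1 1 - γ 0 1) hx (by push_cast; linear_combination hq)
  have hdet : ((γ 0 0 * γ 1 1 - γ 0 1 * γ 1 0 : ℤ) : ℚ) = 0 := by
    push_cast
    linear_combination (-(γ 1 1 : ℚ)) * h₁ + (γ 1 0 : ℚ) * h₀
  exact det_GL2_ne_zero γ (mod_cast hdet)

theorem moebius_mul : moebius (γ * δ) x = moebius γ (moebius δ x) := by
  have hγδ := moebius_denom_ne_zero (γ * δ) hx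
  have hδ := moebius_denom_ne_zero δ hx
  have hγ := moebius_denom_ne_zero γ (irrational_moebius δ hx)
  unfold moebius at hγ ⊢
  simp only [Units.val_mul, Matrix.mul_apply, Fin.sum_univ_two, Int.cast_add, Int.cast_mul]
    at hγδ ⊢
  rw [div_eq_div_iff hγδ hγ]
  field_simp
  ring

end Moebius

/-- The irrational real numbers, on which `GL(2,ℤ)` acts by Möbius transformations without
division by zero. -/
abbrev IrrationalReal : Type := {x : ℝ // Irrational x}

noncomputable instance : MulAction GL2 IrrationalReal where
  smul γ x := ⟨moebius γ x, irrational_moebius γ x.2⟩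
  one_smul x := Subtype.ext (by change moebius 1 x = x; simp [moebius])
  mul_smul γ δ x := Subtype.ext (moebius_mul γ δ x.2)

theorem coe_smul_irrationalReal (γ : GL2) (x : IrrationalReal) :
    ((γ • x : IrrationalReal) : ℝ) = moebius γ x :=
  rfl

theorem neg_one_smul_irrationalReal (x : IrrationalReal) : (-1 : GL2) • x = x :=
  Subtype.ext (by simp [coe_smul_irrationalReal, moebius])

theorem coe_inversion_smul (x : IrrationalReal) :
    ((inversion • x : IrrationalReal) : ℝ) = 1 / x := by
  simp [coe_smul_irrationalReal, moebius, inversion]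

theorem coe_reflection_smul (x : IrrationalReal) :
    ((reflection • x : IrrationalReal) : ℝ) = -x := by
  simp [coe_smul_irrationalReal, moebius, reflection]

theorem one_div_lowerShear_smul (k : ℤ) (x : IrrationalReal) :
    1 / ((lowerShear k • x : IrrationalReal) : ℝ) = 1 / x + k := by
  have hx : (x : ℝ) ≠ 0 := x.2.ne_zero
  simp only [coe_smul_irrationalReal, moebius, lowerShear, Matrix.of_apply, Matrix.cons_val,
    Int.cast_one, one_mul, Int.cast_zero, add_zero, one_div_div]
  field_simp
  ring

theorem one_lt_lowerShear_neg_floor_smul (x : IrrationalReal) :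
    1 < ((lowerShear (-⌊1 / (x : ℝ)⌋) • x : IrrationalReal) : ℝ) := by
  set y := lowerShear (-⌊1 / (x : ℝ)⌋) • x
  have hy : 1 / (y : ℝ) = Int.fract (1 / (x : ℝ)) := by
    rw [one_div_lowerShear_smul, Int.cast_neg, ← sub_eq_add_neg, Int.self_sub_floor]
  have hy_pos : 0 < (y : ℝ) := one_div_pos.1 <|
    (hy ▸ Int.fract_nonneg _).lt_of_ne' (one_div_ne_zero y.2.ne_zero)
  exact (div_lt_one hy_pos).1 (hy ▸ Int.fract_lt_one _)

section GaussShift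

variable {X : Type*} [MulAction GL2 X]

/-- The generalized Gauss shift on irrational numbers paired with points of a `GL(2,ℤ)`-set `X`,
written as the action of the matrix `shiftMat ⌊1 / x⌋` on both components. It is defined at every
irrational number, not only on `(0, 1)`. -/
noncomputable def gaussShift (p : IrrationalReal × X) : IrrationalReal × X :=
  shiftMat ⌊1 / (p.1 : ℝ)⌋ • p

/-- Tail equivalence for the generalized Gauss shift, as an instance so that it is written `≈`. -/
noncomputable local instance gaussTailSetoid : Setoid (IrrationalReal × X) :=
  tailSetoid gaussShift

theorem gaussShift_lowerShear_smul (k : ℤ) (p : IrrationalReal × X) :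
    gaussShift (lowerShear k • p) = gaussShift p := by
  have shiftMat_mul (a : ℤ) : shiftMat (a + k) * lowerShear k = shiftMat a :=
    Units.ext (by simp [shiftMat, lowerShear])
  rw [gaussShift, Prod.smul_fst, one_div_lowerShear_smul, Int.floor_add_intCast, ← mul_smul,
    shiftMat_mul, gaussShift]

theorem gaussShift_inversion_smul {p : IrrationalReal × X} (h₀ : 0 < (p.1 : ℝ))
    (h₁ : (p.1 : ℝ) < 1) : gaussShift (inversion • p) = p := by
  have hfloor : ⌊(p.1 : ℝ)⌋ = 0 := Int.floor_eq_zero_iff.2 ⟨h₀.le, h₁⟩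
  have shiftMat_zero_mul : shiftMat 0 * inversion = 1 :=
    Units.ext (by simp [shiftMat, inversion, Matrix.one_fin_two])
  rw [gaussShift, Prod.smul_fst, coe_inversion_smul, one_div_one_div, hfloor, ← mul_smul,
    shiftMat_zero_mul, one_smul]

theorem gaussShift_equiv_self (p : IrrationalReal × X) : gaussShift p ≈ p :=
  tailSetoid_apply_self gaussShift p

theorem lowerShear_smul_equiv (k : ℤ) (p : IrrationalReal × X) : lowerShear k • p ≈ p :=
  tailSetoid_of_apply_eq (gaussShift_lowerShear_smul k p)

theorem inversion_smul_equiv_of_pos {p : IrrationalReal × X} (hp : 0 < (p.1 : ℝ)) :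
    inversion • p ≈ p := by
  have inversion_smul_equiv_of_lt_one {q : IrrationalReal × X} (h₀ : 0 < (q.1 : ℝ))
      (h₁ : (q.1 : ℝ) < 1) : inversion • q ≈ q := by
    have h := gaussShift_equiv_self (inversion • q)
    rw [gaussShift_inversion_smul h₀ h₁] at h
    exact Setoid.symm h
  rcases lt_or_gt_of_ne p.1.2.ne_one with h | h
  · exact inversion_smul_equiv_of_lt_one hp h
  · have hinv : ((inversion • p).1 : ℝ) = 1 / p.1 := coe_inversion_smul p.1
    have h' := inversion_smul_equiv_of_lt_one (q := inversion • p)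
      (hinv ▸ one_div_pos.2 hp) (hinv ▸ (div_lt_one hp).2 h)
    rw [← mul_smul, inversion_mul_self, one_smul] at h'
    exact Setoid.symm h'

section NegOneActsTrivially

variable (hneg : ∀ s : X, (-1 : GL2) • s = s)
include hneg

theorem neg_smul_irrationalReal_prod (γ : GL2) (p : IrrationalReal × X) : -γ • p = γ • p := by
  rw [← neg_one_mul, mul_smul]
  exact Prod.ext (neg_one_smul_irrationalReal _) (hneg _)

theorem reflection_smul_equiv_of_one_lt {p : IrrationalReal × X} (hp : 1 < (p.1 : ℝ)) :
    reflection • p ≈ p := by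
  -- Both words send `x` to `x - 1`.
  have word_eq : -(lowerShear (-1) * inversion * lowerShear 1 * reflection) =
      inversion * lowerShear (-1) * inversion :=
    Units.ext (by simp [inversion, lowerShear, reflection])
  have shear_reflection_pos : 0 < ((lowerShear 1 • reflection • p).1 : ℝ) := by
    rw [← one_div_pos, Prod.smul_fst, one_div_lowerShear_smul, Prod.smul_fst, coe_reflection_smul]
    have one_div_lt_one := (div_lt_one (one_pos.trans hp)).2 hp
    rw [one_div_neg_eq_neg_one_div]
    push_cast
    linarith
  have shear_inversion_pos : 0 < ((lowerShear (-1) • inversion • p).1 : ℝ) := by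
    rw [← one_div_pos, Prod.smul_fst, one_div_lowerShear_smul, Prod.smul_fst, coe_inversion_smul,
      one_div_one_div]
    push_cast
    linarith
  calc
    reflection • p ≈ lowerShear 1 • reflection • p := Setoid.symm (lowerShear_smul_equiv _ _)
    _ ≈ inversion • lowerShear 1 • reflection • p :=
      Setoid.symm (inversion_smul_equiv_of_pos shear_reflection_pos)
    _ ≈ lowerShear (-1) • inversion • lowerShear 1 • reflection • p :=
      Setoid.symm (lowerShear_smul_equiv _ _)
    _ = inversion • lowerShear (-1) • inversion • p := by
      simp only [← mul_smul, ← mul_assoc, ← word_eq, neg_smul_irrationalReal_prod hneg]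
    _ ≈ lowerShear (-1) • inversion • p := inversion_smul_equiv_of_pos shear_inversion_pos
    _ ≈ inversion • p := lowerShear_smul_equiv _ _
    _ ≈ p := inversion_smul_equiv_of_pos (one_pos.trans hp)

theorem reflection_smul_equiv (p : IrrationalReal × X) : reflection • p ≈ p := by
  set k := -⌊1 / (p.1 : ℝ)⌋
  have reflection_conj : reflection = lowerShear k * reflection * lowerShear k :=
    Units.ext (by simp [reflection, lowerShear])
  calc
    reflection • p = lowerShear k • reflection • lowerShear k • p := by
      rw [← mul_smul, ← mul_smul, ← reflection_conj]
    _ ≈ reflection • lowerShear k • p := lowerShear_smul_equiv _ _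
    _ ≈ lowerShear k • p :=
      reflection_smul_equiv_of_one_lt hneg (one_lt_lowerShear_neg_floor_smul p.1)
    _ ≈ p := lowerShear_smul_equiv _ _

theorem inversion_smul_equiv (p : IrrationalReal × X) : inversion • p ≈ p := by
  rcases lt_or_gt_of_ne p.1.2.ne_zero with hp | hp
  · have reflection_pos : 0 < ((reflection • p).1 : ℝ) := by
      rw [Prod.smul_fst, coe_reflection_smul]
      exact neg_pos.2 hp
    have inversion_conj : -inversion = reflection * inversion * reflection :=
      Units.ext (by simp [reflection, inversion])
    calc
      inversion • p = reflection • inversion • reflection • p := by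
        rw [← neg_smul_irrationalReal_prod hneg, inversion_conj, mul_smul, mul_smul]
      _ ≈ inversion • reflection • p := reflection_smul_equiv hneg _
      _ ≈ reflection • p := inversion_smul_equiv_of_pos reflection_pos
      _ ≈ p := reflection_smul_equiv hneg p
  · exact inversion_smul_equiv_of_pos hp

theorem orbitRel_eq_tailSetoid_gaussShift :
    MulAction.orbitRel GL2 (IrrationalReal × X) = tailSetoid gaussShift := by
  apply le_antisymm
  · refine orbitRel_le_of_closure_eq_top closure_lowerShear_inversion ?_
    rintro _ (rfl | rfl)
    · exact lowerShear_smul_equiv 1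
    · exact inversion_smul_equiv hneg
  · exact tailSetoid_le fun p => MulAction.mem_orbit p _

theorem stmt0_general (x y : IrrationalReal) (s t : X) :
    (∃ γ : GL2, (y : ℝ) = moebius γ x ∧ t = γ • s) ↔
      ∃ n m : ℕ, gaussShift^[n] (x, s) = gaussShift^[m] (y, t) := by
  change _ ↔ tailSetoid gaussShift (x, s) (y, t)
  rw [Setoid.comm', ← orbitRel_eq_tailSetoid_gaussShift hneg]
  simp only [MulAction.orbitRel_apply, MulAction.mem_orbit_iff, Prod.smul_mk, Prod.mk.injEq,
    Subtype.ext_iff, coe_smul_irrationalReal, eq_comm]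

end NegOneActsTrivially

end GaussShift

theorem gaussMap_eq_moebius {x : ℝ} (hx : x ≠ 0) : gaussMap x = moebius (shiftMat ⌊1 / x⌋) x := by
  unfold gaussMap
  generalize ⌊1 / x⌋ = k
  simp only [moebius, shiftMat, Matrix.of_apply, Matrix.cons_val, Int.cast_neg, Int.cast_one,
    Int.cast_zero, one_mul, add_zero]
  field_simp
  ring

section CosetSpace

variable {G : Subgroup GL2}

theorem neg_one_smul_coset (hneg : negOneGL ∈ G) (s : GL2 ⧸ G) : (-1 : GL2) • s = s := by
  have negOneGL_eq : negOneGL = -1 := Units.ext rfl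
  induction s using QuotientGroup.induction_on with
  | H g =>
    rw [MulAction.Quotient.smul_coe, QuotientGroup.eq, smul_eq_mul]
    simpa [negOneGL_eq] using hneg

theorem semiconj_gaussShift_gaussShiftP :
    Function.Semiconj (Prod.map Subtype.val id) (gaussShift (X := GL2 ⧸ G)) (gaussShiftP G) :=
  fun p => Prod.ext (gaussMap_eq_moebius p.1.2.ne_zero).symm rfl

theorem gaussShiftP_iterate_eq_iff (x y : IrrationalReal) (s t : GL2 ⧸ G) (n m : ℕ) :
    (gaussShiftP G)^[n] (x, s) = (gaussShiftP G)^[m] (y, t) ↔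
      gaussShift^[n] (x, s) = gaussShift^[m] (y, t) := by
  have iterate_coe (k : ℕ) (z : IrrationalReal) (u : GL2 ⧸ G) :=
    (semiconj_gaussShift_gaussShiftP (G := G)).iterate_right k (z, u)
  simp only [Prod.map_apply, id_eq] at iterate_coe
  rw [← iterate_coe, ← iterate_coe]
  exact (Subtype.val_injective.prodMap Function.injective_id).eq_iff

end CosetSpace

/-- `GL(2,ℤ)`-orbits on (irrationals in `(0,1)`) × `P` coincide with the
shift-tail equivalence classes of the generalized Gauss shift. -/
theorem stmt0 (G : Subgroup GL2) (hGfin : G.FiniteIndex) (hneg : negOneGL ∈ G)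
    (x y : ℝ) (hx : x ∈ Set.Ioo (0 : ℝ) 1) (hy : y ∈ Set.Ioo (0 : ℝ) 1)
    (hxI : Irrational x) (hyI : Irrational y)
    (s t : GL2 ⧸ G) :
    (∃ γ : GL2, y = moebius γ x ∧ t = γ • s) ↔
      ∃ n m : ℕ, (gaussShiftP G)^[n] (x, s) = (gaussShiftP G)^[m] (y, t) := by
  simpa only [← gaussShiftP_iterate_eq_iff] using
    stmt0_general (neg_one_smul_coset hneg) ⟨x, hxI⟩ ⟨y, hyI⟩ s t
end

section
/- For Lebesgue-almost every x ∈ (0,1), the Lyapunov exponent of the Gauss shift λ(x) = lim_{n→∞} (1/n)·log|(Tⁿ)′(x)| exists and equals π²/(6·log 2); equivalently, for Lebesgue-almost every x ∈ (0,1), lim_{n→∞} (1/n)·log qₙ(x) = π²/(12·log 2). -/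
set_option synthInstance.maxHeartbeats 1000000
set_option maxHeartbeats 1000000

open Filter MeasureTheory

/-!
By the chain rule, `log |(Tⁿ)' x|` is twice the Birkhoff sum `Sₙ` of `|log|` along the orbit of `x`
under the Gauss map `T`, and multiplying the identities `1 / Tᵏ x = cfDigit x k + Tᵏ⁺¹ x` shows that
`Sₙ₊₁ = log (qₙ₊₁ + qₙ Tⁿ⁺¹ x)`, so `Sₙ` and `log qₙ` differ by at most `log 2`. Both limits thus
follow from the law of large numbers for `|log|` under the Gauss measure. Its mean is computed by
expanding `1 / (1 + x)` into a geometric series: `∫₀¹ -log x / (1 + x) = ∑ (-1)ⁿ / (n + 1)²`, which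
is `π² / 12`.

Only summability of the correlations is needed for the law of large numbers, since the variance of
`Sₙ` is then `O(n)` and `Sₙ` is nondecreasing in `n`. It comes from the transfer operator: this maps
nondecreasing functions on `[0, 1]` to nonincreasing ones and at least halves their oscillation. The
function `|log|` is unbounded, but monotone, and its image under the transfer operator is monotone
and finite on `[0, 1]`.
-/

section BirkhoffSum

variable {α M : Type*} [AddCommMonoid M] (T : α → α) (f : α → M) (n : ℕ)

theorem birkhoffSum_succ_eq_add_comp : birkhoffSum T f (n + 1) = f + birkhoffSum T f n ∘ T :=
  funext fun x ↦ birkhoffSum_succ' T f n x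

theorem birkhoffSum_comp_eq_sum :
    birkhoffSum T f n ∘ T = ∑ i ∈ Finset.range n, f ∘ T^[i + 1] := by
  ext x
  simp [birkhoffSum]

end BirkhoffSum

section LawOfLargeNumbers

open scoped ProbabilityTheory Topology

variable {Ω : Type*} [MeasurableSpace Ω] {μ : Measure Ω}

theorem ae_tendsto_zero_of_summable_integral_sq {Y : ℕ → Ω → ℝ}
    (hY : ∀ k, MemLp (Y k) 2 μ) (hsum : Summable fun k ↦ ∫ ω, Y k ω ^ 2 ∂μ) :
    ∀ᵐ ω ∂μ, Tendsto (fun k ↦ Y k ω) atTop (𝓝 0) := by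
  have hmeas (k : ℕ) : AEMeasurable (fun ω ↦ ENNReal.ofReal (Y k ω ^ 2)) μ :=
    (hY k).integrable_sq.aemeasurable.ennreal_ofReal
  have hfin : ∫⁻ ω, ∑' k, ENNReal.ofReal (Y k ω ^ 2) ∂μ ≠ ⊤ := by
    rw [lintegral_tsum hmeas]
    simp_rw [← ofReal_integral_eq_lintegral_ofReal (hY _).integrable_sq
      (ae_of_all _ fun _ ↦ sq_nonneg _)]
    exact hsum.tsum_ofReal_ne_top
  filter_upwards [ae_lt_top' (.tsum hmeas) hfin] with ω hω
  have hsq : Tendsto (fun k ↦ Y k ω ^ 2) atTop (𝓝 0) := by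
    simpa [Function.comp_def, ENNReal.toReal_ofReal, sq_nonneg] using
      (ENNReal.tendsto_toReal ENNReal.zero_ne_top).comp
        (ENNReal.tendsto_atTop_zero_of_tsum_ne_top hω.ne)
  rw [tendsto_zero_iff_abs_tendsto_zero]
  simpa [Function.comp_def, Real.sqrt_sq_eq_abs] using hsq.sqrt

theorem eventually_sq_succ_le_mul_sq {a : ℝ} (ha : 1 < a) :
    ∀ᶠ k : ℕ in atTop, (((k + 1 + 1) ^ 2 : ℕ) : ℝ) ≤ a * ((k + 1) ^ 2 : ℕ) := by
  have hlim : Tendsto (fun k : ℕ ↦ (1 + 1 / ((k : ℝ) + 1)) ^ 2) atTop (𝓝 1) := by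
    simpa using (tendsto_one_div_add_atTop_nhds_zero_nat.const_add (1 : ℝ)).pow 2
  filter_upwards [hlim.eventually_lt_const ha] with k hk
  calc (((k + 1 + 1) ^ 2 : ℕ) : ℝ) = (1 + 1 / ((k : ℝ) + 1)) ^ 2 * ((k + 1) ^ 2 : ℕ) := by
        push_cast; field_simp
    _ ≤ a * ((k + 1) ^ 2 : ℕ) := by gcongr

-- Since `n ↦ S n ω` is monotone, convergence along the squares `n = (k + 1) ^ 2` is enough, and
-- along these the second moments of the errors are summable.
theorem ae_tendsto_div_of_monotone_of_integral_sq_le {S : ℕ → Ω → ℝ} {m K : ℝ}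
    (hmono : ∀ᵐ ω ∂μ, Monotone fun n ↦ S n ω) (hS : ∀ n : ℕ, MemLp (fun ω ↦ S n ω - n * m) 2 μ)
    (hK : ∀ n : ℕ, ∫ ω, (S n ω - n * m) ^ 2 ∂μ ≤ K * n) :
    ∀ᵐ ω ∂μ, Tendsto (fun n : ℕ ↦ S n ω / n) atTop (𝓝 m) := by
  let N (k : ℕ) : ℕ := (k + 1) ^ 2
  let Y (k : ℕ) (ω : Ω) : ℝ := (N k : ℝ)⁻¹ * (S (N k) ω - N k * m)
  have hN (k : ℕ) : (N k : ℝ) ≠ 0 := by positivity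
  have hY (k : ℕ) : ∫ ω, Y k ω ^ 2 ∂μ ≤ K * (1 / ((k : ℝ) + 1) ^ 2) := by
    simp only [Y, mul_pow, integral_const_mul]
    refine (mul_le_mul_of_nonneg_left (hK (N k)) (by positivity)).trans_eq ?_
    simp only [N]; push_cast; field_simp
  have hsum : Summable fun k ↦ ∫ ω, Y k ω ^ 2 ∂μ := by
    refine .of_nonneg_of_le (fun k ↦ integral_nonneg fun ω ↦ sq_nonneg _) hY (.mul_left K ?_)
    exact_mod_cast (summable_nat_add_iff 1).2 (Real.summable_one_div_nat_pow.2 one_lt_two)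
  filter_upwards [hmono, ae_tendsto_zero_of_summable_integral_sq
    (fun k ↦ (hS (N k)).const_mul _) hsum] with ω hω hYω
  have hsub : Tendsto (fun k ↦ S (N k) ω / N k) atTop (𝓝 m) := by
    have := hYω.add_const m
    rw [zero_add] at this
    refine this.congr fun k ↦ ?_
    have := hN k
    field_simp
    ring
  exact tendsto_div_of_monotone_of_exists_subseq_tendsto_div _ m hω fun a ha ↦
    ⟨N, eventually_sq_succ_le_mul_sq ha,
      tendsto_atTop_mono (fun k ↦ by simp only [id, N]; nlinarith) tendsto_id, hsub⟩

variable {T : Ω → Ω} {f : Ω → ℝ}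

theorem integral_comp_of_measurePreserving {E : Type*} [NormedAddCommGroup E] [NormedSpace ℝ E]
    {g : Ω → E} (hT : MeasurePreserving T μ μ)
    (hg : AEStronglyMeasurable g μ) : ∫ ω, g (T ω) ∂μ = ∫ ω, g ω ∂μ := by
  conv_rhs => rw [← hT.map_eq]
  exact (integral_map hT.aemeasurable (hT.map_eq.symm ▸ hg)).symm

theorem memLp_birkhoffSum {p : ENNReal} (hT : MeasurePreserving T μ μ) (hf : MemLp f p μ) (n : ℕ) :
    MemLp (birkhoffSum T f n) p μ :=
  memLp_finsetSum _ fun i _ ↦ hf.comp_measurePreserving (hT.iterate i)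

theorem integral_birkhoffSum (hT : MeasurePreserving T μ μ) (hf : Integrable f μ) (n : ℕ) :
    ∫ ω, birkhoffSum T f n ω ∂μ = n * ∫ ω, f ω ∂μ := by
  have hi (i : ℕ) : ∫ ω, f (T^[i] ω) ∂μ = ∫ ω, f ω ∂μ :=
    integral_comp_of_measurePreserving (hT.iterate i) hf.1
  have hint (i : ℕ) : Integrable (fun ω ↦ f (T^[i] ω)) μ :=
    (hT.iterate i).integrable_comp_of_integrable hf
  simp only [birkhoffSum]
  rw [integral_finsetSum _ fun i _ ↦ hint i]
  simp [hi]

variable [IsProbabilityMeasure μ]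

theorem variance_birkhoffSum_le (hT : MeasurePreserving T μ μ) (hf : MemLp f 2 μ)
    (hcov : Summable fun i ↦ cov[f, f ∘ T^[i]; μ]) (n : ℕ) :
    Var[birkhoffSum T f n; μ] ≤ 2 * (∑' i, |cov[f, f ∘ T^[i]; μ]|) * n := by
  induction n with
  | zero => simp [ProbabilityTheory.variance_zero]
  | succ n ih =>
    have hfi (i : ℕ) : MemLp (f ∘ T^[i]) 2 μ := hf.comp_measurePreserving (hT.iterate i)
    have hS := memLp_birkhoffSum hT hf n
    have hcross : cov[f, birkhoffSum T f n ∘ T; μ] =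
        ∑ i ∈ Finset.range n, cov[f, f ∘ T^[i + 1]; μ] := by
      rw [birkhoffSum_comp_eq_sum]
      exact ProbabilityTheory.covariance_sum_right' (fun i _ ↦ hfi (i + 1)) hf
    have hpartial : Var[f; μ] + 2 * cov[f, birkhoffSum T f n ∘ T; μ] ≤
        2 * ∑' i, |cov[f, f ∘ T^[i]; μ]| := by
      calc Var[f; μ] + 2 * cov[f, birkhoffSum T f n ∘ T; μ]
          ≤ 2 * ∑ i ∈ Finset.range (n + 1), |cov[f, f ∘ T^[i]; μ]| := by
            rw [hcross, Finset.sum_range_succ', Function.iterate_zero, Function.comp_id,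
              ProbabilityTheory.covariance_self hf.1.aemeasurable]
            have := ProbabilityTheory.variance_nonneg f μ
            have := le_abs_self Var[f; μ]
            have := Finset.sum_le_sum fun i (_ : i ∈ Finset.range n) ↦
              le_abs_self cov[f, f ∘ T^[i + 1]; μ]
            linarith
        _ ≤ _ := by
            gcongr
            exact hcov.abs.sum_le_tsum _ fun i _ ↦ abs_nonneg _
    rw [birkhoffSum_succ_eq_add_comp,
      ProbabilityTheory.variance_add hf (hS.comp_measurePreserving hT)]
    have hinv : Var[birkhoffSum T f n ∘ T; μ] = Var[birkhoffSum T f n; μ] :=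
      hT.variance_fun_comp hS.1.aemeasurable
    rw [hinv]
    push_cast
    linarith

theorem ae_tendsto_birkhoffAverage_of_summable_covariance (hT : MeasurePreserving T μ μ)
    (hf : MemLp f 2 μ) (hf_nonneg : 0 ≤ f) (hcov : Summable fun i ↦ cov[f, f ∘ T^[i]; μ]) :
    ∀ᵐ ω ∂μ, Tendsto (birkhoffAverage ℝ T f · ω) atTop (𝓝 (∫ ω, f ω ∂μ)) := by
  have hS := memLp_birkhoffSum hT hf
  have hvar (n : ℕ) : ∫ ω, (birkhoffSum T f n ω - n * ∫ ω, f ω ∂μ) ^ 2 ∂μ ≤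
      2 * (∑' i, |cov[f, f ∘ T^[i]; μ]|) * n := by
    rw [← integral_birkhoffSum hT (hf.integrable one_le_two) n,
      ← ProbabilityTheory.variance_eq_integral (hS n).1.aemeasurable]
    exact variance_birkhoffSum_le hT hf hcov n
  have hmono (ω : Ω) : Monotone fun n ↦ birkhoffSum T f n ω :=
    monotone_nat_of_le_succ fun n ↦ by simpa [birkhoffSum_succ] using hf_nonneg (T^[n] ω)
  filter_upwards [ae_tendsto_div_of_monotone_of_integral_sq_le (ae_of_all _ hmono)
    (fun n ↦ (hS n).sub (memLp_const _)) hvar] with ω hω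
  simpa [birkhoffAverage, div_eq_inv_mul] using hω

end LawOfLargeNumbers

section GaussMeasure

open scoped Topology

/-- The inverse branches `y ↦ 1 / (k + 1 + y)` of the Gauss map. The branch of index `k` has first
continued fraction digit `k + 1`. -/
noncomputable def gaussBranch (k : ℕ) (y : ℝ) : ℝ := ((k : ℝ) + 1 + y)⁻¹

/-- The density `1 / (log 2 * (1 + x))` of the Gauss measure. -/
noncomputable def gaussDensity (x : ℝ) : ℝ := (Real.log 2 * (1 + x))⁻¹

/-- The invariant probability measure of the Gauss map on `(0, 1)`, viewed as a measure on `ℝ`. -/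
noncomputable def gaussMeasure : Measure ℝ :=
  (volume.restrict (Set.Ioo 0 1)).withDensity fun x ↦ ENNReal.ofReal (gaussDensity x)

/-- The weight of the `k`-th inverse branch at `x`: the conditional probability, under the Gauss
measure, that a point has first digit `k + 1` given that its image under the Gauss map is `x`. -/
noncomputable def gaussWeight (k : ℕ) (x : ℝ) : ℝ := (1 + x) / ((k + 1 + x) * (k + 2 + x))

theorem measurable_gaussMap : Measurable gaussMap := by
  have hfloor : Measurable fun x : ℝ ↦ (⌊1 / x⌋ : ℝ) :=
    measurable_from_top.comp (measurable_const.div measurable_id).floor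
  exact (measurable_const.div measurable_id).sub hfloor

theorem measurable_gaussBranch (k : ℕ) : Measurable (gaussBranch k) := by
  unfold gaussBranch; fun_prop

theorem measurable_gaussDensity : Measurable gaussDensity := by
  unfold gaussDensity; fun_prop

theorem measurable_gaussWeight (k : ℕ) : Measurable (gaussWeight k) := by
  unfold gaussWeight; fun_prop

theorem gaussBranch_mem_Ioc (k : ℕ) {y : ℝ} (hy : 0 ≤ y) : gaussBranch k y ∈ Set.Ioc 0 1 :=
  ⟨by unfold gaussBranch; positivity,
    inv_le_one_of_one_le₀ (by linarith [k.cast_nonneg (α := ℝ)])⟩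

theorem gaussDensity_pos {x : ℝ} (hx : 0 ≤ x) : 0 < gaussDensity x := by
  have := Real.log_pos one_lt_two
  unfold gaussDensity
  positivity

theorem gaussWeight_nonneg (k : ℕ) {x : ℝ} (hx : 0 ≤ x) : 0 ≤ gaussWeight k x := by
  unfold gaussWeight
  positivity

theorem gaussMap_gaussBranch (k : ℕ) {y : ℝ} (hy : y ∈ Set.Ico 0 1) :
    gaussMap (gaussBranch k y) = y := by
  have hfloor : ⌊(k : ℝ) + 1 + y⌋ = k + 1 := by
    rw [Int.floor_eq_iff]
    push_cast
    exact ⟨by linarith [hy.1], by linarith [hy.2]⟩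
  rw [gaussMap, gaussBranch, one_div, inv_inv, hfloor]
  push_cast
  ring

theorem injOn_gaussBranch (k : ℕ) : Set.InjOn (gaussBranch k) (Set.Ico 0 1) :=
  Set.LeftInvOn.injOn fun _ hy ↦ gaussMap_gaussBranch k hy

theorem pairwise_disjoint_image_gaussBranch :
    Pairwise (Function.onFun Disjoint fun k ↦ gaussBranch k '' Set.Ico 0 1) := by
  refine fun j k hjk ↦ Set.disjoint_left.2 ?_
  rintro _ ⟨y, hy, rfl⟩ ⟨z, hz, hzy⟩
  obtain rfl : z = y := by
    rw [← gaussMap_gaussBranch k hz, hzy, gaussMap_gaussBranch j hy]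
  exact hjk (by simpa [gaussBranch] using hzy.symm)

theorem gaussMap_mem_Ico (x : ℝ) : gaussMap x ∈ Set.Ico 0 1 :=
  ⟨Int.fract_nonneg (1 / x), Int.fract_lt_one (1 / x)⟩

theorem iUnion_image_gaussBranch : ⋃ k, gaussBranch k '' Set.Ico 0 1 = Set.Ioc 0 1 := by
  refine subset_antisymm (Set.iUnion_subset fun k ↦ ?_) fun x hx ↦ Set.mem_iUnion.2 ?_
  · rintro _ ⟨y, hy, rfl⟩
    exact gaussBranch_mem_Ioc k hy.1
  · have hfloor : 1 ≤ ⌊1 / x⌋ := Int.le_floor.2 (by simpa using (one_le_inv₀ hx.1).2 hx.2)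
    obtain ⟨k, hk⟩ := Int.eq_ofNat_of_zero_le (sub_nonneg.2 hfloor)
    refine ⟨k, gaussMap x, gaussMap_mem_Ico x, ?_⟩
    have hk' : (⌊1 / x⌋ : ℝ) = k + 1 := by exact_mod_cast sub_eq_iff_eq_add.1 hk
    rw [gaussBranch, gaussMap, hk', add_sub_cancel, one_div, inv_inv]

theorem hasDerivAt_gaussBranch (k : ℕ) {y : ℝ} (hy : 0 ≤ y) :
    HasDerivAt (gaussBranch k) (-gaussBranch k y ^ 2) y := by
  have hne : (k : ℝ) + 1 + y ≠ 0 := by positivity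
  refine (((hasDerivAt_id y).const_add ((k : ℝ) + 1)).fun_inv hne).congr_deriv ?_
  simp [gaussBranch, neg_div]

theorem gaussBranch_sq_mul_gaussDensity (k : ℕ) {y : ℝ} (hy : 0 ≤ y) :
    gaussBranch k y ^ 2 * gaussDensity (gaussBranch k y) = gaussDensity y * gaussWeight k y := by
  have := (Real.log_pos one_lt_two).ne'
  have : (k : ℝ) + 1 + y + 1 ≠ 0 := by positivity
  have : (k : ℝ) + 2 + y ≠ 0 := by positivity
  simp only [gaussBranch, gaussDensity, gaussWeight]
  field_simp
  ring

theorem gaussMeasure_eq_withDensity_Ico : gaussMeasure =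
    (volume.restrict (Set.Ico 0 1)).withDensity fun x ↦ ENNReal.ofReal (gaussDensity x) := by
  rw [gaussMeasure, Measure.restrict_congr_set Ioo_ae_eq_Ico]

theorem gaussMeasure_eq_withDensity_Ioc : gaussMeasure =
    (volume.restrict (Set.Ioc 0 1)).withDensity fun x ↦ ENNReal.ofReal (gaussDensity x) := by
  rw [gaussMeasure, Measure.restrict_congr_set Ioo_ae_eq_Ioc]

theorem measurableSet_image_gaussBranch (k : ℕ) :
    MeasurableSet (gaussBranch k '' Set.Ico 0 1) :=
  measurableSet_Ico.image_of_measurable_injOn (measurable_gaussBranch k) (injOn_gaussBranch k)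

theorem withDensity_image_gaussBranch (k : ℕ) :
    (volume.restrict (gaussBranch k '' Set.Ico 0 1)).withDensity
        (fun x ↦ ENNReal.ofReal (gaussDensity x)) =
      (gaussMeasure.withDensity fun x ↦ ENNReal.ofReal (gaussWeight k x)).map
        (gaussBranch k) := by
  have hU := measurable_gaussBranch k
  have hρ := measurable_gaussDensity.ennreal_ofReal
  have hP := (measurable_gaussWeight k).ennreal_ofReal
  ext s hs
  rw [Measure.map_apply hU hs, withDensity_apply _ hs, withDensity_apply _ (hU hs),
    ← lintegral_indicator hs, ← lintegral_indicator (hU hs), gaussMeasure_eq_withDensity_Ico,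
    lintegral_withDensity_eq_lintegral_mul _ hρ (hP.indicator (hU hs)),
    lintegral_image_eq_lintegral_abs_deriv_mul measurableSet_Ico
      (fun y hy ↦ (hasDerivAt_gaussBranch k hy.1).hasDerivWithinAt) (injOn_gaussBranch k)]
  refine setLIntegral_congr_fun measurableSet_Ico fun y hy ↦ ?_
  by_cases hys : gaussBranch k y ∈ s
  · have hys' : y ∈ gaussBranch k ⁻¹' s := hys
    simp only [Pi.mul_apply, Set.indicator_of_mem hys, Set.indicator_of_mem hys']
    rw [← ENNReal.ofReal_mul (abs_nonneg _), ← ENNReal.ofReal_mul (gaussDensity_pos hy.1).le,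
      abs_neg, abs_of_nonneg (sq_nonneg _), gaussBranch_sq_mul_gaussDensity k hy.1]
  · have hys' : y ∉ gaussBranch k ⁻¹' s := hys
    simp [hys, hys']

theorem gaussMeasure_eq_sum_map_gaussBranch :
    gaussMeasure = Measure.sum fun k ↦
      (gaussMeasure.withDensity fun x ↦ ENNReal.ofReal (gaussWeight k x)).map (gaussBranch k) := by
  simp_rw [← withDensity_image_gaussBranch]
  rw [← withDensity_sum, ← Measure.restrict_iUnion pairwise_disjoint_image_gaussBranch
    measurableSet_image_gaussBranch, iUnion_image_gaussBranch, gaussMeasure_eq_withDensity_Ioc]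

theorem hasSum_gaussWeight {x : ℝ} (hx : 0 ≤ x) : HasSum (fun k ↦ gaussWeight k x) 1 := by
  have htelescope (n : ℕ) :
      ∑ k ∈ Finset.range n, gaussWeight k x = 1 - (1 + x) * ((n : ℝ) + (1 + x))⁻¹ := by
    induction n with
    | zero =>
      have : 1 + x ≠ 0 := by positivity
      simp [this]
    | succ n ih =>
      rw [Finset.sum_range_succ, ih, gaussWeight]
      push_cast
      field_simp
      ring
  have hlim : Tendsto (fun n : ℕ ↦ ((n : ℝ) + (1 + x))⁻¹) atTop (𝓝 0) :=
    tendsto_inv_atTop_zero.comp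
      (tendsto_atTop_add_const_right _ _ tendsto_natCast_atTop_atTop)
  rw [hasSum_iff_tendsto_nat_of_nonneg fun k ↦ gaussWeight_nonneg k hx]
  simpa [htelescope] using (hlim.const_mul (1 + x)).const_sub 1

theorem ae_gaussMeasure_mem_Ioo : ∀ᵐ x ∂gaussMeasure, x ∈ Set.Ioo 0 1 :=
  (withDensity_absolutelyContinuous _ _).ae_le (ae_restrict_mem measurableSet_Ioo)

theorem restrict_Ioo_absolutelyContinuous_gaussMeasure :
    volume.restrict (Set.Ioo 0 1) ≪ gaussMeasure := by
  refine withDensity_absolutelyContinuous' measurable_gaussDensity.ennreal_ofReal.aemeasurable ?_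
  filter_upwards [ae_restrict_mem measurableSet_Ioo] with x hx
  exact (ENNReal.ofReal_pos.2 (gaussDensity_pos hx.1.le)).ne'

theorem gaussMeasure_le_smul_restrict : gaussMeasure ≤
    ENNReal.ofReal (Real.log 2)⁻¹ • volume.restrict (Set.Ioo 0 1) := by
  rw [gaussMeasure, ← withDensity_const]
  refine withDensity_mono ?_
  filter_upwards [ae_restrict_mem measurableSet_Ioo] with x hx
  have hlog := Real.log_pos one_lt_two
  exact ENNReal.ofReal_le_ofReal
    (inv_anti₀ hlog (le_mul_of_one_le_right hlog.le (by linarith [hx.1])))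

theorem intervalIntegrable_gaussDensity : IntervalIntegrable gaussDensity volume 0 1 := by
  refine ContinuousOn.intervalIntegrable_of_Icc zero_le_one (.inv₀ (by fun_prop) fun x hx ↦ ?_)
  exact (inv_pos.1 (gaussDensity_pos hx.1)).ne'

theorem integral_gaussDensity : ∫ x in (0 : ℝ)..1, gaussDensity x = 1 := by
  rw [intervalIntegral.integral_eq_sub_of_hasDerivAt
    (f := fun x ↦ Real.log (1 + x) / Real.log 2) (fun x hx ↦ ?_) intervalIntegrable_gaussDensity]
  · norm_num
  · rw [Set.uIcc_of_le zero_le_one] at hx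
    have h1x : 1 + x ≠ 0 := by have := hx.1; positivity
    refine ((((hasDerivAt_id x).const_add 1).log h1x).div_const (Real.log 2)).congr_deriv ?_
    simp [gaussDensity, div_eq_mul_inv]

instance : IsProbabilityMeasure gaussMeasure where
  measure_univ := by
    have hint := (intervalIntegrable_iff_integrableOn_Ioo_of_le zero_le_one).1
      intervalIntegrable_gaussDensity
    have hpos : 0 ≤ᵐ[volume.restrict (Set.Ioo 0 1)] gaussDensity := by
      filter_upwards [ae_restrict_mem measurableSet_Ioo] with x hx
      exact (gaussDensity_pos hx.1.le).le
    rw [gaussMeasure, withDensity_apply _ .univ, setLIntegral_univ,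
      ← ofReal_integral_eq_lintegral_ofReal hint hpos, ← integral_Ioc_eq_integral_Ioo,
      ← intervalIntegral.integral_of_le zero_le_one, integral_gaussDensity, ENNReal.ofReal_one]

theorem map_gaussMap_map_gaussBranch (k : ℕ) :
    ((gaussMeasure.withDensity fun x ↦ ENNReal.ofReal (gaussWeight k x)).map
      (gaussBranch k)).map gaussMap =
      gaussMeasure.withDensity fun x ↦ ENNReal.ofReal (gaussWeight k x) := by
  rw [Measure.map_map measurable_gaussMap (measurable_gaussBranch k)]
  refine (Measure.map_congr ((withDensity_absolutelyContinuous _ _).ae_le ?_)).trans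
    Measure.map_id
  filter_upwards [ae_gaussMeasure_mem_Ioo] with x hx
  exact gaussMap_gaussBranch k (Set.Ioo_subset_Ico_self hx)

theorem measurePreserving_gaussMap : MeasurePreserving gaussMap gaussMeasure gaussMeasure := by
  have hweight : (∑' k, fun x ↦ ENNReal.ofReal (gaussWeight k x)) =ᵐ[gaussMeasure] 1 := by
    filter_upwards [ae_gaussMeasure_mem_Ioo] with x hx
    have hsum := hasSum_gaussWeight hx.1.le
    rw [ENNReal.tsum_apply, ← ENNReal.ofReal_tsum_of_nonneg
      (fun k ↦ gaussWeight_nonneg k hx.1.le) hsum.summable, hsum.tsum_eq, ENNReal.ofReal_one,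
      Pi.one_apply]
  refine ⟨measurable_gaussMap, ?_⟩
  calc gaussMeasure.map gaussMap
      = Measure.sum fun k ↦ gaussMeasure.withDensity fun x ↦ ENNReal.ofReal (gaussWeight k x) := by
        conv_lhs => rw [gaussMeasure_eq_sum_map_gaussBranch]
        rw [Measure.map_sum measurable_gaussMap.aemeasurable]
        simp_rw [map_gaussMap_map_gaussBranch]
    _ = gaussMeasure := by
        rw [← withDensity_tsum fun k ↦ (measurable_gaussWeight k).ennreal_ofReal,
          withDensity_congr_ae hweight, withDensity_one]

end GaussMeasure

section TransferOperator

/-- The transfer operator of the Gauss map with respect to the Gauss measure: `gaussTransfer f x`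
is the average of `f` over the preimages of `x`. As an infinite sum of reals, it is only
meaningful where the series converges. -/
noncomputable def gaussTransfer (f : ℝ → ℝ) (x : ℝ) : ℝ :=
  ∑' k, gaussWeight k x * f (gaussBranch k x)

theorem integral_map_gaussBranch (k : ℕ) {φ : ℝ → ℝ} (hφ : AEStronglyMeasurable φ gaussMeasure) :
    ∫ x, φ x ∂(gaussMeasure.withDensity fun x ↦ ENNReal.ofReal (gaussWeight k x)).map
        (gaussBranch k) =
      ∫ x, gaussWeight k x * φ (gaussBranch k x) ∂gaussMeasure := by
  rw [gaussMeasure_eq_sum_map_gaussBranch] at hφ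
  have hφk := hφ.mono_measure (Measure.le_sum _ k)
  rw [integral_map (measurable_gaussBranch k).aemeasurable hφk,
    integral_withDensity_eq_integral_toReal_smul (measurable_gaussWeight k).ennreal_ofReal
      (ae_of_all _ fun _ ↦ ENNReal.ofReal_lt_top)]
  refine integral_congr_ae ?_
  filter_upwards [ae_gaussMeasure_mem_Ioo] with x hx
  rw [ENNReal.toReal_ofReal (gaussWeight_nonneg k hx.1.le), smul_eq_mul]

theorem integrable_gaussWeight_mul_comp_gaussBranch (k : ℕ) {φ : ℝ → ℝ}
    (hφ : Integrable φ gaussMeasure) :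
    Integrable (fun x ↦ gaussWeight k x * φ (gaussBranch k x)) gaussMeasure := by
  rw [gaussMeasure_eq_sum_map_gaussBranch] at hφ
  have hφk := (hφ.mono_measure (Measure.le_sum _ k)).comp_measurable (measurable_gaussBranch k)
  rw [integrable_withDensity_iff_integrable_smul' (measurable_gaussWeight k).ennreal_ofReal
    (ae_of_all _ fun _ ↦ ENNReal.ofReal_lt_top)] at hφk
  refine hφk.congr ?_
  filter_upwards [ae_gaussMeasure_mem_Ioo] with x hx
  rw [ENNReal.toReal_ofReal (gaussWeight_nonneg k hx.1.le), smul_eq_mul, Function.comp_apply]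

theorem integral_gaussTransfer {φ : ℝ → ℝ} (hφ : Integrable φ gaussMeasure) :
    ∫ x, gaussTransfer φ x ∂gaussMeasure = ∫ x, φ x ∂gaussMeasure := by
  have hsum {ψ : ℝ → ℝ} (hψ : Integrable ψ gaussMeasure) :
      HasSum (fun k ↦ ∫ x, gaussWeight k x * ψ (gaussBranch k x) ∂gaussMeasure)
        (∫ x, ψ x ∂gaussMeasure) := by
    have hψ' := hψ
    rw [gaussMeasure_eq_sum_map_gaussBranch] at hψ'
    have := hasSum_integral_measure hψ'
    rw [← gaussMeasure_eq_sum_map_gaussBranch] at this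
    simpa only [integral_map_gaussBranch _ hψ.1] using this
  have hnorm : Summable fun k ↦ ∫ x, ‖gaussWeight k x * φ (gaussBranch k x)‖ ∂gaussMeasure := by
    refine (hsum hφ.norm).summable.congr fun k ↦ integral_congr_ae ?_
    filter_upwards [ae_gaussMeasure_mem_Ioo] with x hx
    rw [norm_mul, Real.norm_of_nonneg (gaussWeight_nonneg k hx.1.le)]
  exact (hasSum_integral_of_summable_integral_norm
    (fun k ↦ integrable_gaussWeight_mul_comp_gaussBranch k hφ) hnorm).unique (hsum hφ)

theorem gaussTransfer_mul_comp_gaussMap (h G : ℝ → ℝ) {x : ℝ} (hx : x ∈ Set.Ico 0 1) :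
    gaussTransfer (fun y ↦ h y * G (gaussMap y)) x = gaussTransfer h x * G x := by
  simp only [gaussTransfer, gaussMap_gaussBranch _ hx, ← mul_assoc, tsum_mul_right]

theorem integral_mul_comp_gaussMap {h G : ℝ → ℝ}
    (hint : Integrable (fun x ↦ h x * G (gaussMap x)) gaussMeasure) :
    ∫ x, h x * G (gaussMap x) ∂gaussMeasure = ∫ x, gaussTransfer h x * G x ∂gaussMeasure := by
  rw [← integral_gaussTransfer hint]
  refine integral_congr_ae ?_
  filter_upwards [ae_gaussMeasure_mem_Ioo] with x hx
  exact gaussTransfer_mul_comp_gaussMap h G (Set.Ioo_subset_Ico_self hx)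

theorem gaussTransfer_neg (f : ℝ → ℝ) (x : ℝ) :
    gaussTransfer (fun y ↦ -f y) x = -gaussTransfer f x := by
  simp [gaussTransfer, tsum_neg]

theorem gaussBranch_le_gaussBranch {j k : ℕ} {x y : ℝ} (hjk : j ≤ k) (hx : 0 ≤ x) (hxy : x ≤ y) :
    gaussBranch k y ≤ gaussBranch j x := by
  unfold gaussBranch
  gcongr

theorem antitoneOn_gaussWeight_zero : AntitoneOn (gaussWeight 0) (Set.Ici 0) := by
  have hweight {x : ℝ} (hx : x ∈ Set.Ici 0) : gaussWeight 0 x = (2 + x)⁻¹ := by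
    have : 0 ≤ x := hx
    simp only [gaussWeight, Nat.cast_zero, zero_add]
    field_simp
  intro x hx y hy hxy
  rw [hweight hx, hweight hy]
  have : 0 ≤ x := hx
  gcongr

theorem monotoneOn_gaussWeight_add_two (k : ℕ) :
    MonotoneOn (gaussWeight (k + 2)) (Set.Icc 0 1) := by
  intro x hx y hy hxy
  have := hx.1
  have := hy.1
  have hcross : (1 + y) * (((k : ℝ) + 3 + x) * (k + 4 + x)) -
      (1 + x) * ((k + 3 + y) * (k + 4 + y)) =
      (y - x) * ((k + 2) * (k + 3) - (1 + x) * (1 + y)) := by ring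
  have hprod : (1 + x) * (1 + y) ≤ 2 * 2 :=
    mul_le_mul (by linarith [hx.2]) (by linarith [hy.2]) (by linarith) zero_le_two
  have hnonneg : 0 ≤ (y - x) * (((k : ℝ) + 2) * (k + 3) - (1 + x) * (1 + y)) :=
    mul_nonneg (sub_nonneg.2 hxy) (by nlinarith [k.cast_nonneg (α := ℝ)])
  simp only [gaussWeight, Nat.cast_add, Nat.cast_ofNat]
  rw [div_le_div_iff₀ (by positivity) (by positivity)]
  linarith [hcross]

-- The weight of branch `0` decreases, those of the branches `k ≥ 2` increase, and subtracting the
-- constant `f (gaussBranch 1 x)` removes the branch `1`, whose weight is not monotone.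
theorem antitoneOn_gaussTransfer {f : ℝ → ℝ} (hf : MonotoneOn f (Set.Ioc 0 1))
    (hsum : ∀ x ∈ Set.Icc (0 : ℝ) 1, Summable fun k ↦ gaussWeight k x * f (gaussBranch k x)) :
    AntitoneOn (gaussTransfer f) (Set.Icc 0 1) := by
  intro x hx y hy hxy
  set c := f (gaussBranch 1 x)
  have hcentred {z : ℝ} (hz : z ∈ Set.Icc (0 : ℝ) 1) :
      HasSum (fun k ↦ gaussWeight k z * (f (gaussBranch k z) - c)) (gaussTransfer f z - c) := by
    simpa only [mul_sub, one_mul, gaussTransfer] using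
      (hsum z hz).hasSum.sub ((hasSum_gaussWeight hz.1).mul_right c)
  have hbranch {j k : ℕ} {u v : ℝ} (hjk : j ≤ k) (hu : 0 ≤ u) (huv : u ≤ v) :
      f (gaussBranch k v) ≤ f (gaussBranch j u) :=
    hf (gaussBranch_mem_Ioc k (hu.trans huv)) (gaussBranch_mem_Ioc j hu)
      (gaussBranch_le_gaussBranch hjk hu huv)
  have hweight (k : ℕ) : gaussWeight k y * (f (gaussBranch k x) - c) ≤
      gaussWeight k x * (f (gaussBranch k x) - c) := by
    match k with
    | 0 =>
      exact mul_le_mul_of_nonneg_right (antitoneOn_gaussWeight_zero hx.1 hy.1 hxy)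
        (sub_nonneg.2 (hbranch zero_le_one hx.1 le_rfl))
    | 1 => simp [c]
    | k + 2 =>
      exact mul_le_mul_of_nonpos_right (monotoneOn_gaussWeight_add_two k hx hy hxy)
        (sub_nonpos.2 (hbranch (by lia) hx.1 le_rfl))
  refine sub_le_sub_iff_right c |>.1 (hasSum_le (fun k ↦ ?_) (hcentred hy) (hcentred hx))
  calc gaussWeight k y * (f (gaussBranch k y) - c)
      ≤ gaussWeight k y * (f (gaussBranch k x) - c) :=
        mul_le_mul_of_nonneg_left (sub_le_sub_right (hbranch le_rfl hx.1 hxy) c)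
          (gaussWeight_nonneg k hy.1)
    _ ≤ gaussWeight k x * (f (gaussBranch k x) - c) := hweight k

theorem monotoneOn_gaussTransfer {f : ℝ → ℝ} (hf : AntitoneOn f (Set.Ioc 0 1))
    (hsum : ∀ x ∈ Set.Icc (0 : ℝ) 1, Summable fun k ↦ gaussWeight k x * f (gaussBranch k x)) :
    MonotoneOn (gaussTransfer f) (Set.Icc 0 1) := by
  have hneg := antitoneOn_gaussTransfer hf.neg fun x hx ↦ by simpa using (hsum x hx).neg
  intro x hx y hy hxy
  simpa [gaussTransfer_neg] using hneg hx hy hxy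

theorem summable_gaussWeight_mul_of_monotoneOn {f : ℝ → ℝ} (hf : MonotoneOn f (Set.Icc 0 1))
    {x : ℝ} (hx : 0 ≤ x) : Summable fun k ↦ gaussWeight k x * f (gaussBranch k x) := by
  refine .of_norm_bounded ((hasSum_gaussWeight hx).summable.mul_right (max |f 0| |f 1|))
    fun k ↦ ?_
  have hk := gaussBranch_mem_Ioc k hx
  rw [norm_mul, Real.norm_of_nonneg (gaussWeight_nonneg k hx)]
  refine mul_le_mul_of_nonneg_left ?_ (gaussWeight_nonneg k hx)
  exact abs_le_max_abs_abs (hf (by simp) (Set.Ioc_subset_Icc_self hk) hk.1.le)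
    (hf (Set.Ioc_subset_Icc_self hk) (by simp) hk.2)

-- The branches `k + 1` at `0` are the branches `k` at `1`, with half the weight.
theorem gaussTransfer_zero_eq {f : ℝ → ℝ}
    (hsum : Summable fun k ↦ gaussWeight k 0 * f (gaussBranch k 0)) :
    gaussTransfer f 0 = (f 1 + gaussTransfer f 1) / 2 := by
  have hshift (k : ℕ) : gaussWeight (k + 1) 0 * f (gaussBranch (k + 1) 0) =
      gaussWeight k 1 * f (gaussBranch k 1) / 2 := by
    have hbranch : gaussBranch (k + 1) 0 = gaussBranch k 1 := by simp [gaussBranch]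
    rw [hbranch, gaussWeight, gaussWeight]
    push_cast
    field_simp
    ring
  rw [gaussTransfer, hsum.tsum_eq_zero_add, tsum_congr hshift, tsum_div_const, gaussTransfer]
  norm_num [gaussWeight, gaussBranch]
  ring

theorem gaussTransfer_zero_sub_gaussTransfer_one_le {f : ℝ → ℝ}
    (hf : MonotoneOn f (Set.Icc 0 1)) :
    gaussTransfer f 0 - gaussTransfer f 1 ≤ (f 1 - f 0) / 2 := by
  have hsum {x : ℝ} (hx : 0 ≤ x) := summable_gaussWeight_mul_of_monotoneOn hf hx
  have haverage : f 0 ≤ gaussTransfer f 1 := by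
    have hconst := (hasSum_gaussWeight zero_le_one).mul_right (f 0)
    rw [one_mul] at hconst
    refine hasSum_le (fun k ↦ ?_) hconst (hsum zero_le_one).hasSum
    have hk := Set.Ioc_subset_Icc_self (gaussBranch_mem_Ioc k zero_le_one)
    exact mul_le_mul_of_nonneg_left (hf (by simp) hk hk.1) (gaussWeight_nonneg k zero_le_one)
  linarith [gaussTransfer_zero_eq (hsum le_rfl)]

end TransferOperator

section DecayOfCorrelations

variable {h G : ℝ → ℝ}

theorem aestronglyMeasurable_gaussMeasure_of_monotoneOn (hh : MonotoneOn h (Set.Icc 0 1)) :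
    AEStronglyMeasurable h gaussMeasure :=
  ((aemeasurable_restrict_of_monotoneOn measurableSet_Ioo
    (hh.mono Set.Ioo_subset_Icc_self)).mono_ac
      (withDensity_absolutelyContinuous _ _)).aestronglyMeasurable

theorem ae_mem_Icc_of_monotoneOn (hh : MonotoneOn h (Set.Icc 0 1)) :
    ∀ᵐ x ∂gaussMeasure, h x ∈ Set.Icc (h 0) (h 1) := by
  filter_upwards [ae_gaussMeasure_mem_Ioo] with x hx
  have hx' := Set.Ioo_subset_Icc_self hx
  exact ⟨hh (by simp) hx' hx.1.le, hh hx' (by simp) hx.2.le⟩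

theorem integrable_gaussMeasure_of_monotoneOn (hh : MonotoneOn h (Set.Icc 0 1)) :
    Integrable h gaussMeasure :=
  .of_mem_Icc _ _ (aestronglyMeasurable_gaussMeasure_of_monotoneOn hh).aemeasurable
    (ae_mem_Icc_of_monotoneOn hh)

theorem integrable_mul_of_monotoneOn (hh : MonotoneOn h (Set.Icc 0 1))
    (hG : Integrable G gaussMeasure) : Integrable (fun x ↦ h x * G x) gaussMeasure := by
  refine hG.bdd_mul (c := max |h 0| |h 1|)
    (aestronglyMeasurable_gaussMeasure_of_monotoneOn hh) ?_
  filter_upwards [ae_mem_Icc_of_monotoneOn hh] with x hx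
  exact abs_le_max_abs_abs hx.1 hx.2

theorem abs_integral_mul_sub_le (hh : MonotoneOn h (Set.Icc 0 1))
    (hG : Integrable G gaussMeasure) :
    |∫ x, h x * G x ∂gaussMeasure - (∫ x, h x ∂gaussMeasure) * ∫ x, G x ∂gaussMeasure| ≤
      (h 1 - h 0) * ∫ x, |G x| ∂gaussMeasure := by
  set m := ∫ x, h x ∂gaussMeasure
  have hm : m ∈ Set.Icc (h 0) (h 1) :=
    (convex_Icc _ _).integral_mem isClosed_Icc (ae_mem_Icc_of_monotoneOn hh)
      (integrable_gaussMeasure_of_monotoneOn hh)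
  rw [← integral_const_mul, ← integral_sub (integrable_mul_of_monotoneOn hh hG)
    (hG.const_mul m), ← integral_const_mul, ← Real.norm_eq_abs]
  refine norm_integral_le_of_norm_le (hG.abs.const_mul _) ?_
  filter_upwards [ae_mem_Icc_of_monotoneOn hh] with x hx
  rw [← sub_mul, norm_mul]
  exact mul_le_mul_of_nonneg_right (abs_sub_le_of_le_of_le hx.1 hx.2 hm.1 hm.2) (abs_nonneg _)

theorem abs_integral_mul_comp_iterate_sub_le (hh : MonotoneOn h (Set.Icc 0 1))
    (hG : Integrable G gaussMeasure) (n : ℕ) :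
    |∫ x, h x * G (gaussMap^[n] x) ∂gaussMeasure -
        (∫ x, h x ∂gaussMeasure) * ∫ x, G x ∂gaussMeasure| ≤
      (h 1 - h 0) / 2 ^ n * ∫ x, |G x| ∂gaussMeasure := by
  induction n generalizing h with
  | zero => simpa using abs_integral_mul_sub_le hh hG
  | succ n ih =>
    have hanti : AntitoneOn (gaussTransfer h) (Set.Icc 0 1) :=
      antitoneOn_gaussTransfer (hh.mono Set.Ioc_subset_Icc_self) fun x hx ↦
        summable_gaussWeight_mul_of_monotoneOn hh hx.1
    have hGT : Integrable (fun x ↦ h x * G (gaussMap^[n + 1] x)) gaussMeasure :=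
      integrable_mul_of_monotoneOn hh <|
        (measurePreserving_gaussMap.iterate (n + 1)).integrable_comp_of_integrable hG
    simp only [Function.iterate_succ_apply] at hGT ⊢
    rw [integral_mul_comp_gaussMap (G := fun x ↦ G (gaussMap^[n] x)) hGT,
      ← integral_gaussTransfer (integrable_gaussMeasure_of_monotoneOn hh)]
    calc |∫ x, gaussTransfer h x * G (gaussMap^[n] x) ∂gaussMeasure -
          (∫ x, gaussTransfer h x ∂gaussMeasure) * ∫ x, G x ∂gaussMeasure|
        ≤ (gaussTransfer h 0 - gaussTransfer h 1) / 2 ^ n * ∫ x, |G x| ∂gaussMeasure := by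
          simpa [integral_neg, neg_add_eq_sub, abs_sub_comm] using ih hanti.neg
      _ ≤ (h 1 - h 0) / 2 / 2 ^ n * ∫ x, |G x| ∂gaussMeasure := by
          gcongr
          exact gaussTransfer_zero_sub_gaussTransfer_one_le hh
      _ = (h 1 - h 0) / 2 ^ (n + 1) * ∫ x, |G x| ∂gaussMeasure := by
          rw [div_div, ← pow_succ']

end DecayOfCorrelations

section LogMoments

open scoped ProbabilityTheory Topology

theorem abs_covariance_comp_iterate_succ_le {f G : ℝ → ℝ} (hf : MemLp f 2 gaussMeasure)
    (hG : MemLp G 2 gaussMeasure) (hmono : MonotoneOn (gaussTransfer f) (Set.Icc 0 1)) (n : ℕ) :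
    |cov[f, G ∘ gaussMap^[n + 1]; gaussMeasure]| ≤
      (gaussTransfer f 1 - gaussTransfer f 0) / 2 ^ n * ∫ x, |G x| ∂gaussMeasure := by
  have hT := measurePreserving_gaussMap.iterate (n + 1)
  have hGT := hG.comp_measurePreserving hT
  have hint : Integrable (fun x ↦ f x * G (gaussMap^[n + 1] x)) gaussMeasure :=
    hf.integrable_mul hGT
  have hduality : ∫ x, f x * G (gaussMap^[n + 1] x) ∂gaussMeasure =
      ∫ x, gaussTransfer f x * G (gaussMap^[n] x) ∂gaussMeasure :=
    integral_mul_comp_gaussMap (G := fun x ↦ G (gaussMap^[n] x)) hint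
  rw [ProbabilityTheory.covariance_eq_sub hf hGT]
  simp only [Pi.mul_apply, Function.comp_apply]
  rw [hduality, integral_comp_of_measurePreserving hT hG.1,
    ← integral_gaussTransfer (hf.integrable one_le_two)]
  exact abs_integral_mul_comp_iterate_sub_le hmono (hG.integrable one_le_two) n

theorem summable_covariance_comp_iterate {f G : ℝ → ℝ} (hf : MemLp f 2 gaussMeasure)
    (hG : MemLp G 2 gaussMeasure) (hmono : MonotoneOn (gaussTransfer f) (Set.Icc 0 1)) :
    Summable fun n ↦ cov[f, G ∘ gaussMap^[n]; gaussMeasure] := by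
  refine (summable_nat_add_iff 1).1 (.of_norm_bounded (.mul_right _ ?_)
    (abs_covariance_comp_iterate_succ_le hf hG hmono))
  exact (summable_geometric_two.mul_left _).congr fun n ↦ by
    rw [one_div, inv_pow, ← div_eq_mul_inv]

theorem antitoneOn_abs_log : AntitoneOn (fun x ↦ |Real.log x|) (Set.Ioc 0 1) := by
  intro x hx y hy hxy
  simp only [abs_of_nonpos (Real.log_nonpos hx.1.le hx.2),
    abs_of_nonpos (Real.log_nonpos hy.1.le hy.2)]
  exact neg_le_neg (Real.log_le_log hx.1 hxy)

theorem gaussWeight_mul_abs_log_gaussBranch_le (k : ℕ) {x : ℝ} (hx : x ∈ Set.Icc (0 : ℝ) 1) :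
    gaussWeight k x * |Real.log (gaussBranch k x)| ≤ 4 * ((k : ℝ) + 1) ^ (-(3 / 2) : ℝ) := by
  have hx0 := hx.1
  set a := (k : ℝ) + 1 + x
  have ha1 : 1 ≤ a := by linarith [k.cast_nonneg (α := ℝ)]
  have hweight : gaussWeight k x ≤ 2 / a ^ 2 := by
    refine div_le_div₀ zero_le_two (by linarith [hx.2]) (by positivity) ?_
    nlinarith
  have hlog : |Real.log (gaussBranch k x)| ≤ 2 * a ^ (1 / 2 : ℝ) := by
    rw [gaussBranch, Real.log_inv, abs_neg, abs_of_nonneg (Real.log_nonneg ha1)]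
    linarith [Real.log_le_rpow_div (zero_le_one.trans ha1) (one_half_pos (α := ℝ))]
  calc gaussWeight k x * |Real.log (gaussBranch k x)|
      ≤ 2 / a ^ 2 * (2 * a ^ (1 / 2 : ℝ)) :=
        mul_le_mul hweight hlog (abs_nonneg _) (by positivity)
    _ = 4 * a ^ (1 / 2 - (2 : ℕ) : ℝ) := by
        rw [Real.rpow_sub_natCast (by positivity)]
        ring
    _ ≤ 4 * ((k : ℝ) + 1) ^ (1 / 2 - (2 : ℕ) : ℝ) := by
        gcongr 4 * ?_
        exact Real.rpow_le_rpow_of_nonpos (by positivity) (by linarith) (by norm_num)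
    _ = 4 * ((k : ℝ) + 1) ^ (-(3 / 2) : ℝ) := by norm_num

theorem summable_gaussWeight_mul_abs_log {x : ℝ} (hx : x ∈ Set.Icc (0 : ℝ) 1) :
    Summable fun k ↦ gaussWeight k x * |Real.log (gaussBranch k x)| := by
  have hrpow : Summable fun k : ℕ ↦ ((k : ℝ) + 1) ^ (-(3 / 2) : ℝ) :=
    mod_cast (summable_nat_add_iff 1).2
      (Real.summable_nat_rpow.2 (by norm_num : -(3 / 2) < (-1 : ℝ)))
  exact .of_nonneg_of_le (fun k ↦ mul_nonneg (gaussWeight_nonneg k hx.1) (abs_nonneg _))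
    (fun k ↦ gaussWeight_mul_abs_log_gaussBranch_le k hx) (hrpow.mul_left 4)

theorem monotoneOn_gaussTransfer_abs_log :
    MonotoneOn (gaussTransfer fun x ↦ |Real.log x|) (Set.Icc 0 1) :=
  monotoneOn_gaussTransfer antitoneOn_abs_log fun _ hx ↦ summable_gaussWeight_mul_abs_log hx

theorem integrableOn_log_sq : IntegrableOn (fun x ↦ Real.log x ^ 2) (Set.Ioo 0 1) := by
  have hrpow : IntegrableOn (fun x : ℝ ↦ 16 * x ^ (-(1 / 2) : ℝ)) (Set.Ioo 0 1) :=
    (intervalIntegrable_iff_integrableOn_Ioo_of_le zero_le_one).1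
      ((intervalIntegral.intervalIntegrable_rpow' (by norm_num)).const_mul 16)
  refine hrpow.mono' (Real.measurable_log.pow_const 2).aestronglyMeasurable ?_
  filter_upwards [ae_restrict_mem measurableSet_Ioo] with x hx
  have hquarter : |Real.log x * x ^ (1 / 4 : ℝ)| ≤ 4 := by
    simpa using (Real.abs_log_mul_self_rpow_lt x (1 / 4) hx.1 hx.2.le (by norm_num)).le
  have hsq : x ^ (1 / 2 : ℝ) = (x ^ (1 / 4 : ℝ)) ^ 2 := by
    rw [← Real.rpow_mul_natCast hx.1.le]
    norm_num
  rw [Real.norm_of_nonneg (sq_nonneg _), Real.rpow_neg hx.1.le, ← div_eq_mul_inv,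
    le_div_iff₀ (Real.rpow_pos_of_pos hx.1 _), hsq, ← mul_pow, ← sq_abs]
  nlinarith [abs_nonneg (Real.log x * x ^ (1 / 4 : ℝ))]

theorem memLp_abs_log : MemLp (fun x ↦ |Real.log x|) 2 gaussMeasure := by
  refine MemLp.abs ((memLp_two_iff_integrable_sq Real.measurable_log.aestronglyMeasurable).2 ?_)
  exact (integrableOn_log_sq.smul_measure ENNReal.ofReal_ne_top).mono_measure
    gaussMeasure_le_smul_restrict

theorem intervalIntegrable_pow_mul_log (n : ℕ) :
    IntervalIntegrable (fun x ↦ x ^ n * Real.log x) volume 0 1 :=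
  intervalIntegral.intervalIntegrable_log'.continuousOn_mul (by fun_prop)

theorem integral_pow_mul_log (n : ℕ) :
    ∫ x in (0 : ℝ)..1, x ^ n * Real.log x = -(1 / ((n : ℝ) + 1) ^ 2) := by
  have hn : (n : ℝ) + 1 ≠ 0 := by positivity
  have hcont : Continuous fun x : ℝ ↦
      x ^ n * (x * Real.log x) / (n + 1) - x ^ (n + 1) / ((n : ℝ) + 1) ^ 2 := by
    have := Real.continuous_mul_log
    fun_prop
  rw [intervalIntegral.integral_eq_sub_of_hasDerivAt_of_le zero_le_one hcont.continuousOn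
    (fun x hx ↦ ?_) (intervalIntegrable_pow_mul_log n)]
  · simp
  · have hx0 : x ≠ 0 := hx.1.ne'
    have hderiv := (((hasDerivAt_pow (n + 1) x).mul (Real.hasDerivAt_log hx0)).div_const
      ((n : ℝ) + 1)).sub ((hasDerivAt_pow (n + 1) x).div_const (((n : ℝ) + 1) ^ 2))
    refine (hderiv.congr_deriv ?_).congr_of_eventuallyEq (.of_forall fun y ↦ ?_)
    · push_cast
      field_simp
      ring
    · simp only [Pi.sub_apply, Pi.mul_apply]
      ring

theorem hasSum_neg_one_pow_div_sq :
    HasSum (fun n : ℕ ↦ (-1 : ℝ) ^ n * (1 / ((n : ℝ) + 1) ^ 2)) (Real.pi ^ 2 / 12) := by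
  let a (n : ℕ) : ℝ := 1 / ((n : ℝ) + 1) ^ 2
  have hzeta : HasSum a (Real.pi ^ 2 / 6) := by
    simpa [a] using (hasSum_nat_add_iff' 1).2 hasSum_zeta_two
  have hodd : HasSum (fun n ↦ a (2 * n + 1)) (Real.pi ^ 2 / 24) := by
    rw [show Real.pi ^ 2 / 24 = Real.pi ^ 2 / 6 / 4 by ring]
    refine (hzeta.div_const 4).congr_fun fun n ↦ ?_
    simp only [a]
    push_cast
    field_simp
    ring
  have heven : HasSum (fun n ↦ a (2 * n)) (Real.pi ^ 2 / 8) := by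
    have hsum : Summable fun n ↦ a (2 * n) :=
      hzeta.summable.comp_injective (mul_right_injective₀ two_ne_zero)
    have htotal := (hsum.hasSum.even_add_odd hodd).unique hzeta
    rw [show Real.pi ^ 2 / 8 = ∑' n, a (2 * n) by linarith]
    exact hsum.hasSum
  rw [show Real.pi ^ 2 / 12 = Real.pi ^ 2 / 8 + -(Real.pi ^ 2 / 24) by ring]
  refine HasSum.even_add_odd (f := fun n ↦ (-1) ^ n * a n) ?_ ?_
  · simpa [pow_mul] using heven
  · simpa [pow_mul, pow_succ] using hodd.neg

theorem integral_neg_log_div_one_add :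
    ∫ x in (0 : ℝ)..1, -Real.log x / (1 + x) = Real.pi ^ 2 / 12 := by
  let F (n : ℕ) (x : ℝ) : ℝ := (-1) ^ (n + 1) * (x ^ n * Real.log x)
  have hnorm (n : ℕ) : ∫ x in Set.Ioc (0 : ℝ) 1, ‖F n x‖ = 1 / ((n : ℝ) + 1) ^ 2 := by
    rw [← neg_neg (1 / _), ← integral_pow_mul_log, intervalIntegral.integral_of_le zero_le_one,
      ← integral_neg]
    refine setIntegral_congr_fun measurableSet_Ioc fun x hx ↦ ?_
    simp [F, abs_of_pos hx.1, abs_of_nonpos (Real.log_nonpos hx.1.le hx.2)]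
  have hsum : HasSum (fun n ↦ ∫ x in Set.Ioc (0 : ℝ) 1, F n x)
      (∫ x in Set.Ioc (0 : ℝ) 1, ∑' n, F n x) := by
    refine hasSum_integral_of_summable_integral_norm (fun n ↦ ?_) ?_
    · exact ((intervalIntegrable_iff_integrableOn_Ioc_of_le zero_le_one).1
        (intervalIntegrable_pow_mul_log n)).const_mul _
    · simp_rw [hnorm]
      exact_mod_cast (summable_nat_add_iff 1).2 (Real.summable_one_div_nat_pow.2 one_lt_two)
  have hterm (n : ℕ) : ∫ x in Set.Ioc (0 : ℝ) 1, F n x = (-1) ^ n * (1 / ((n : ℝ) + 1) ^ 2) := by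
    rw [integral_const_mul, ← intervalIntegral.integral_of_le zero_le_one, integral_pow_mul_log]
    ring
  have hgeom {x : ℝ} (hx : x ∈ Set.Ioo (0 : ℝ) 1) : -Real.log x / (1 + x) = ∑' n, F n x := by
    have habs : |-x| < 1 := by simpa [abs_of_pos hx.1] using hx.2
    have hpow := hasSum_geometric_of_abs_lt_one habs
    rw [← sub_neg_eq_add, div_eq_inv_mul, ← (hpow.mul_right _).tsum_eq]
    refine tsum_congr fun n ↦ ?_
    rw [neg_pow x n]
    ring
  simp_rw [hterm] at hsum
  rw [← hsum.unique hasSum_neg_one_pow_div_sq, intervalIntegral.integral_of_le zero_le_one,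
    integral_Ioc_eq_integral_Ioo, integral_Ioc_eq_integral_Ioo]
  exact setIntegral_congr_fun measurableSet_Ioo fun x hx ↦ hgeom hx

theorem integral_abs_log_gaussMeasure :
    ∫ x, |Real.log x| ∂gaussMeasure = Real.pi ^ 2 / (12 * Real.log 2) := by
  rw [gaussMeasure, integral_withDensity_eq_integral_toReal_smul
    measurable_gaussDensity.ennreal_ofReal (ae_of_all _ fun _ ↦ ENNReal.ofReal_lt_top)]
  calc ∫ x in Set.Ioo (0 : ℝ) 1, (ENNReal.ofReal (gaussDensity x)).toReal • |Real.log x|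
      = ∫ x in Set.Ioo (0 : ℝ) 1, (Real.log 2)⁻¹ * (-Real.log x / (1 + x)) := by
        refine setIntegral_congr_fun measurableSet_Ioo fun x hx ↦ ?_
        rw [ENNReal.toReal_ofReal (gaussDensity_pos hx.1.le).le,
          abs_of_nonpos (Real.log_nonpos hx.1.le hx.2.le), gaussDensity, smul_eq_mul,
          mul_inv]
        ring
    _ = (Real.log 2)⁻¹ * (Real.pi ^ 2 / 12) := by
        rw [integral_const_mul, ← integral_Ioc_eq_integral_Ioo,
          ← intervalIntegral.integral_of_le zero_le_one, integral_neg_log_div_one_add]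
    _ = Real.pi ^ 2 / (12 * Real.log 2) := by
        ring

theorem ae_tendsto_birkhoffAverage_abs_log :
    ∀ᵐ x ∂volume.restrict (Set.Ioo 0 1),
      Tendsto (birkhoffAverage ℝ gaussMap (fun x ↦ |Real.log x|) · x) atTop
        (𝓝 (Real.pi ^ 2 / (12 * Real.log 2))) := by
  rw [← integral_abs_log_gaussMeasure]
  exact restrict_Ioo_absolutelyContinuous_gaussMeasure.ae_le <|
    ae_tendsto_birkhoffAverage_of_summable_covariance measurePreserving_gaussMap memLp_abs_log
      (fun _ ↦ abs_nonneg _)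
      (summable_covariance_comp_iterate memLp_abs_log memLp_abs_log
        monotoneOn_gaussTransfer_abs_log)

end LogMoments

section LyapunovExponent

open scoped Topology

theorem hasDerivAt_iterate_prod {𝕜 : Type*} [NontriviallyNormedField 𝕜] {f f' : 𝕜 → 𝕜} {x : 𝕜}
    {n : ℕ} (hf : ∀ k < n, HasDerivAt f (f' (f^[k] x)) (f^[k] x)) :
    HasDerivAt f^[n] (∏ k ∈ Finset.range n, f' (f^[k] x)) x := by
  induction n with
  | zero => simpa using hasDerivAt_id x
  | succ n ih =>
    rw [Function.iterate_succ', Finset.prod_range_succ_comm]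
    exact (hf n n.lt_succ_self).comp x (ih fun k hk ↦ hf k (hk.trans n.lt_succ_self))

theorem log_abs_deriv_iterate {f f' : ℝ → ℝ} {x : ℝ} {n : ℕ}
    (hf : ∀ k < n, HasDerivAt f (f' (f^[k] x)) (f^[k] x)) (hf' : ∀ k < n, f' (f^[k] x) ≠ 0) :
    Real.log |deriv f^[n] x| = birkhoffSum f (fun y ↦ Real.log |f' y|) n x := by
  rw [(hasDerivAt_iterate_prod hf).deriv, Finset.abs_prod,
    Real.log_prod fun k hk ↦ abs_ne_zero.2 (hf' k (Finset.mem_range.1 hk)), birkhoffSum]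

theorem irrational_gaussMap {x : ℝ} (hx : Irrational x) : Irrational (gaussMap x) := by
  rw [gaussMap, one_div]
  exact hx.inv.sub_intCast _

theorem irrational_iterate_gaussMap {x : ℝ} (hx : Irrational x) (n : ℕ) :
    Irrational (gaussMap^[n] x) :=
  Set.MapsTo.iterate (s := {x | Irrational x}) (fun _ ↦ irrational_gaussMap) n hx

theorem iterate_gaussMap_mem_Ioo {x : ℝ} (hx : Irrational x) (hx01 : x ∈ Set.Ioo 0 1) (n : ℕ) :
    gaussMap^[n] x ∈ Set.Ioo 0 1 := by
  cases n with
  | zero => exact hx01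
  | succ n =>
    have hirr := irrational_iterate_gaussMap hx (n + 1)
    rw [Function.iterate_succ_apply'] at hirr ⊢
    have hmem := gaussMap_mem_Ico (gaussMap^[n] x)
    exact ⟨hmem.1.lt_of_ne' hirr.ne_zero, hmem.2⟩

theorem hasDerivAt_gaussMap {x : ℝ} (hx : Irrational x) : HasDerivAt gaussMap (-(x ^ 2)⁻¹) x := by
  have hfloor : (fun y : ℝ ↦ ⌊y⁻¹⌋) =ᶠ[𝓝 x] fun _ ↦ ⌊x⁻¹⌋ := by
    have hnhds : Set.Ioo (⌊x⁻¹⌋ : ℝ) (⌊x⁻¹⌋ + 1) ∈ 𝓝 x⁻¹ :=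
      Ioo_mem_nhds ((Int.floor_le _).lt_of_ne' (hx.inv.ne_int _)) (Int.lt_floor_add_one _)
    filter_upwards [(continuousAt_inv₀ hx.ne_zero).preimage_mem_nhds hnhds] with y hy
    exact Int.floor_eq_iff.2 ⟨hy.1.le, hy.2⟩
  refine ((hasDerivAt_inv hx.ne_zero).sub_const (⌊x⁻¹⌋ : ℝ)).congr_of_eventuallyEq ?_
  filter_upwards [hfloor] with y hy
  rw [gaussMap, one_div, hy]

theorem log_abs_deriv_iterate_gaussMap {x : ℝ} (hx : Irrational x) (hx01 : x ∈ Set.Ioo 0 1)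
    (n : ℕ) :
    Real.log |deriv gaussMap^[n] x| = 2 * birkhoffSum gaussMap (fun y ↦ |Real.log y|) n x := by
  rw [log_abs_deriv_iterate (f' := fun y ↦ -(y ^ 2)⁻¹)
    (fun k _ ↦ hasDerivAt_gaussMap (irrational_iterate_gaussMap hx k))
    (fun k _ ↦ by simpa using (irrational_iterate_gaussMap hx k).ne_zero),
    birkhoffSum, birkhoffSum, Finset.mul_sum]
  refine Finset.sum_congr rfl fun k _ ↦ ?_
  have hmem := iterate_gaussMap_mem_Ioo hx hx01 k
  rw [abs_of_nonpos (Real.log_nonpos hmem.1.le hmem.2.le), abs_neg, Real.log_abs, Real.log_inv,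
    Real.log_pow]
  push_cast
  ring

end LyapunovExponent

section Denominators

open scoped Topology

theorem inv_iterate_gaussMap (x : ℝ) (n : ℕ) :
    (gaussMap^[n] x)⁻¹ = cfDigit x n + gaussMap^[n + 1] x := by
  rw [Function.iterate_succ_apply', cfDigit, gaussMap, one_div, add_sub_cancel]

theorem cfQ_add_two (x : ℝ) (n : ℕ) :
    cfQ x (n + 2) = cfDigit x (n + 1) * cfQ x (n + 1) + cfQ x n := by
  rw [cfQ]

theorem one_le_cfDigit {x : ℝ} (hx : Irrational x) (hx01 : x ∈ Set.Ioo 0 1) (n : ℕ) :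
    1 ≤ cfDigit x n := by
  have hmem := iterate_gaussMap_mem_Ioo hx hx01 n
  rw [cfDigit, Int.le_floor, Int.cast_one]
  exact one_le_one_div hmem.1 hmem.2.le

theorem cfQ_pos_and_le_succ {x : ℝ} (hx : Irrational x) (hx01 : x ∈ Set.Ioo 0 1) (n : ℕ) :
    0 < cfQ x n ∧ cfQ x n ≤ cfQ x (n + 1) := by
  induction n with
  | zero => exact ⟨one_pos, one_le_cfDigit hx hx01 0⟩
  | succ n ih =>
    refine ⟨ih.1.trans_le ih.2, ?_⟩
    rw [cfQ_add_two]
    nlinarith [one_le_cfDigit hx hx01 (n + 1)]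

theorem birkhoffSum_abs_log_eq_log_cfQ {x : ℝ} (hx : Irrational x) (hx01 : x ∈ Set.Ioo 0 1)
    (n : ℕ) :
    birkhoffSum gaussMap (fun y ↦ |Real.log y|) (n + 1) x =
      Real.log (cfQ x (n + 1) + cfQ x n * gaussMap^[n + 1] x) := by
  have habs (n : ℕ) :
      |Real.log (gaussMap^[n] x)| = Real.log (cfDigit x n + gaussMap^[n + 1] x) := by
    have hmem := iterate_gaussMap_mem_Ioo hx hx01 n
    rw [abs_of_nonpos (Real.log_nonpos hmem.1.le hmem.2.le), ← Real.log_inv,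
      inv_iterate_gaussMap]
  induction n with
  | zero => simpa [cfQ] using habs 0
  | succ n ih =>
    have hq : (0 : ℝ) < cfQ x n := mod_cast (cfQ_pos_and_le_succ hx hx01 n).1
    have hq' : (0 : ℝ) < cfQ x (n + 1) := mod_cast (cfQ_pos_and_le_succ hx hx01 (n + 1)).1
    have hpos := (iterate_gaussMap_mem_Ioo hx hx01 (n + 1)).1
    have hinv := inv_iterate_gaussMap x (n + 1)
    rw [birkhoffSum_succ, ih, habs, ← Real.log_mul (by positivity)
      (by rw [← hinv]; positivity), cfQ_add_two]
    congr 1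
    rw [← hinv, eq_sub_of_add_eq' hinv.symm]
    push_cast
    field_simp
    ring

theorem birkhoffSum_abs_log_mem_Icc {x : ℝ} (hx : Irrational x) (hx01 : x ∈ Set.Ioo 0 1)
    (n : ℕ) :
    birkhoffSum gaussMap (fun y ↦ |Real.log y|) n x ∈
      Set.Icc (Real.log (cfQ x n)) (Real.log (cfQ x n) + Real.log 2) := by
  cases n with
  | zero => simp [cfQ, Real.log_nonneg one_le_two]
  | succ n =>
    have hmem := iterate_gaussMap_mem_Ioo hx hx01 (n + 1)
    have hq : (0 : ℝ) < cfQ x n := mod_cast (cfQ_pos_and_le_succ hx hx01 n).1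
    have hle : (cfQ x n : ℝ) ≤ cfQ x (n + 1) := mod_cast (cfQ_pos_and_le_succ hx hx01 n).2
    have hq' := hq.trans_le hle
    rw [birkhoffSum_abs_log_eq_log_cfQ hx hx01, ← Real.log_mul hq'.ne' two_ne_zero]
    exact ⟨Real.log_le_log hq' (by nlinarith [hmem.1]),
      Real.log_le_log (by nlinarith [hmem.1]) (by nlinarith [hmem.2])⟩

theorem tendsto_log_cfQ_div_of_tendsto_birkhoffAverage {x l : ℝ} (hx : Irrational x)
    (hx01 : x ∈ Set.Ioo 0 1)
    (h : Tendsto (birkhoffAverage ℝ gaussMap (fun y ↦ |Real.log y|) · x) atTop (𝓝 l)) :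
    Tendsto (fun n : ℕ ↦ 1 / (n : ℝ) * Real.log (cfQ x n)) atTop (𝓝 l) := by
  have hlower := h.sub (tendsto_const_div_atTop_nhds_zero_nat (Real.log 2))
  rw [sub_zero] at hlower
  refine tendsto_of_tendsto_of_tendsto_of_le_of_le hlower h (fun n ↦ ?_) fun n ↦ ?_
  · rw [birkhoffAverage, smul_eq_mul, one_div, div_eq_inv_mul, ← mul_sub]
    gcongr
    exact sub_le_iff_le_add.2 (birkhoffSum_abs_log_mem_Icc hx hx01 n).2
  · rw [birkhoffAverage, smul_eq_mul, one_div]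
    gcongr
    exact (birkhoffSum_abs_log_mem_Icc hx hx01 n).1

end Denominators

theorem ae_irrational : ∀ᵐ x : ℝ, Irrational x :=
  (Set.countable_range ((↑) : ℚ → ℝ)).ae_notMem volume

/-- for Lebesgue-almost every `x ∈ (0,1)` the Lyapunov exponent of the Gauss
shift exists and equals `π²/(6 log 2)`; equivalently `(1/n) log qₙ(x) → π²/(12 log 2)`. -/
theorem stmt3 :
    ∀ᵐ x ∂(volume.restrict (Set.Ioo (0 : ℝ) 1)),
      Tendsto (fun n : ℕ => (1 / (n : ℝ)) * Real.log |deriv (gaussMap^[n]) x|)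
        atTop (nhds (Real.pi ^ 2 / (6 * Real.log 2))) ∧
      Tendsto (fun n : ℕ => (1 / (n : ℝ)) * Real.log (cfQ x n : ℝ))
        atTop (nhds (Real.pi ^ 2 / (12 * Real.log 2))) := by
  filter_upwards [ae_tendsto_birkhoffAverage_abs_log, ae_restrict_mem measurableSet_Ioo,
    ae_restrict_of_ae ae_irrational] with x hlim hx01 hx
  refine ⟨?_, tendsto_log_cfQ_div_of_tendsto_birkhoffAverage hx hx01 hlim⟩
  rw [show Real.pi ^ 2 / (6 * Real.log 2) = 2 * (Real.pi ^ 2 / (12 * Real.log 2)) by ring]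
  refine (hlim.const_mul 2).congr fun n ↦ ?_
  rw [log_abs_deriv_iterate_gaussMap hx hx01, birkhoffAverage, smul_eq_mul]
  ring
end

section
/- Fix an integer g ≥ 1 and a real number s > 0. Suppose F : ℂ → ℂ is complex-differentiable at every point z ≠ 1 and satisfies F(z) = Σ_{n=0}^∞ 2g · ((s+n)/(2π))^{−z} for all z with Re z > 1 (where the series converges absolutely). Then exp(−F′(0)) = ((2π)^{−s} Γ(s))^{−2g} = Γ_ℂ(s)^{−2g}. That is, the zeta-regularized determinant of the operator (s − Φ)/(2π), where Φ has eigenvalue −n with multiplicity 2g for each integer n ≥ 0, equals the inverse of the archimedean local L-factor L(H¹(X), s) = Γ_ℂ(s)^{2g} of a genus-g curve at a complex place. -/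
set_option synthInstance.maxHeartbeats 1000000
set_option maxHeartbeats 1000000

/- The Hurwitz zeta function `ζ(z, s) = ∑ (s + n) ^ (-z)` is the limit of its Euler–Maclaurin sums
`∑_{n < N} (s + n) ^ (-z) + (s + N) ^ (-z) / 2 - (s + N) ^ (1 - z) / (1 - z)`. Consecutive ones
differ by the error of a trapezoidal rule, which is `O(N ^ (-re z - 2))`, so they converge locally
uniformly on the half-plane `-1 < re z` punctured at `1`, and this provides the continuation of the
series to a neighbourhood of `0`. There one reads off `ζ(0, s) = 1 / 2 - s` exactly, and by
Stirling's formula `ζ'(0, s) = log Γ(s) - log (2 * π) / 2`. By uniqueness of continuation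
`F z = 2 * g * (2 * π) ^ z * ζ(z, s)` near `0`, so that `F'(0) = 2 * g * log Γ_ℂ(s)`. -/

open Filter Topology

section Trapezoid

variable {E : Type*} [NormedAddCommGroup E] [NormedSpace ℝ E]

theorem norm_trapezoid_sub_le {G f f' f'' : ℝ → E} {a b C : ℝ} (hab : a ≤ b)
    (hG : ∀ t ∈ Set.Icc a b, HasDerivAt G (f t) t)
    (hf : ∀ t ∈ Set.Icc a b, HasDerivAt f (f' t) t)
    (hf' : ∀ t ∈ Set.Icc a b, HasDerivAt f' (f'' t) t)
    (hC : ∀ t ∈ Set.Icc a b, ‖f'' t‖ ≤ C) :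
    ‖((b - a) / 2) • (f a + f b) - (G b - G a)‖ ≤ C * (b - a) ^ 3 / 8 := by
  -- With `w t = (t - a) * (b - t) / 2`, the function `w • f' - w' • f - G` is a primitive
  -- of `w • f''` and its increment over `[a, b]` is the trapezoidal error.
  let P : ℝ → E := fun t =>
    ((t - a) * (b - t) / 2) • f' t - ((a + b - 2 * t) / 2) • f t - G t
  have hP : ∀ t ∈ Set.Icc a b, HasDerivWithinAt P (((t - a) * (b - t) / 2) • f'' t)
      (Set.Icc a b) t := by
    intro t ht
    have hw : HasDerivAt (fun t : ℝ => (t - a) * (b - t) / 2) ((a + b - 2 * t) / 2) t :=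
      (((hasDerivAt_id t).sub_const a).mul ((hasDerivAt_id t).const_sub b)).div_const 2
        |>.congr_deriv (by simp only [id]; ring)
    have hw' : HasDerivAt (fun t : ℝ => (a + b - 2 * t) / 2) (-1) t :=
      ((((hasDerivAt_id t).const_mul 2).const_sub (a + b)).div_const 2).congr_deriv (by norm_num)
    refine HasDerivAt.hasDerivWithinAt ?_
    refine (((hw.smul (hf' t ht)).sub (hw'.smul (hf t ht))).sub (hG t ht)).congr_deriv ?_
    module
  have hbound : ∀ t ∈ Set.Ico a b, ‖((t - a) * (b - t) / 2) • f'' t‖ ≤ (b - a) ^ 2 / 8 * C := by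
    intro t ht
    have hw_nonneg : 0 ≤ (t - a) * (b - t) / 2 :=
      div_nonneg (mul_nonneg (sub_nonneg.2 ht.1) (sub_nonneg.2 ht.2.le)) zero_le_two
    have hw_le : (t - a) * (b - t) / 2 ≤ (b - a) ^ 2 / 8 := by
      linarith [sq_nonneg (a + b - 2 * t)]
    rw [norm_smul, Real.norm_of_nonneg hw_nonneg]
    exact mul_le_mul hw_le (hC t (Set.Ico_subset_Icc_self ht)) (norm_nonneg _) (by positivity)
  have hincr : P b - P a = ((b - a) / 2) • (f a + f b) - (G b - G a) := by
    simp only [P, sub_self, mul_zero, zero_mul, zero_div, zero_smul]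
    module
  calc ‖((b - a) / 2) • (f a + f b) - (G b - G a)‖ = ‖P b - P a‖ := by rw [hincr]
    _ ≤ (b - a) ^ 2 / 8 * C * (b - a) :=
      norm_image_sub_le_of_norm_deriv_le_segment' hP hbound b (Set.right_mem_Icc.2 hab)
    _ = C * (b - a) ^ 3 / 8 := by ring

end Trapezoid

theorem hasDerivAt_ofReal_cpow_of_pos {x : ℝ} (hx : 0 < x) (r : ℂ) :
    HasDerivAt (fun y : ℝ => (y : ℂ) ^ r) (r * (x : ℂ) ^ (r - 1)) x := by
  simpa using ((hasDerivAt_id (x : ℂ)).cpow_const (c := r)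
    (Complex.ofReal_mem_slitPlane.2 hx)).comp_ofReal

theorem norm_trapezoid_cpow_sub_le {x : ℝ} (hx : 0 < x) {z : ℂ} (hz : z ≠ 1) (hre : -2 ≤ z.re) :
    ‖((x : ℂ) ^ (-z) + ((x + 1 : ℝ) : ℂ) ^ (-z)) / 2
        - (((x + 1 : ℝ) : ℂ) ^ (1 - z) - (x : ℂ) ^ (1 - z)) / (1 - z)‖
      ≤ ‖z‖ * ‖z + 1‖ / 8 * x ^ (-z.re - 2) := by
  have hz' : 1 - z ≠ 0 := sub_ne_zero.2 hz.symm
  have hpos : ∀ t ∈ Set.Icc x (x + 1), 0 < t := fun t ht => hx.trans_le ht.1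
  have hG : ∀ t ∈ Set.Icc x (x + 1),
      HasDerivAt (fun t : ℝ => (t : ℂ) ^ (1 - z) / (1 - z)) ((t : ℂ) ^ (-z)) t := fun t ht =>
    ((hasDerivAt_ofReal_cpow_of_pos (hpos t ht) (1 - z)).div_const (1 - z)).congr_deriv
      (by rw [mul_div_cancel_left₀ _ hz', sub_sub_cancel_left])
  have hf : ∀ t ∈ Set.Icc x (x + 1),
      HasDerivAt (fun t : ℝ => (t : ℂ) ^ (-z)) (-z * (t : ℂ) ^ (-z - 1)) t := fun t ht =>
    hasDerivAt_ofReal_cpow_of_pos (hpos t ht) (-z)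
  have hf' : ∀ t ∈ Set.Icc x (x + 1),
      HasDerivAt (fun t : ℝ => -z * (t : ℂ) ^ (-z - 1))
        (-z * ((-z - 1) * (t : ℂ) ^ (-z - 1 - 1))) t := fun t ht =>
    (hasDerivAt_ofReal_cpow_of_pos (hpos t ht) (-z - 1)).const_mul (-z)
  have hbound : ∀ t ∈ Set.Icc x (x + 1),
      ‖-z * ((-z - 1) * (t : ℂ) ^ (-z - 1 - 1))‖ ≤ ‖z‖ * ‖z + 1‖ * x ^ (-z.re - 2) := by
    intro t ht
    have hexp : (-z - 1 - 1).re = -z.re - 2 := by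
      simp only [Complex.sub_re, Complex.neg_re, Complex.one_re]; ring
    rw [norm_mul, norm_mul, Complex.norm_cpow_eq_rpow_re_of_pos (hpos t ht), hexp, norm_neg,
      ← neg_add', norm_neg, ← mul_assoc]
    exact mul_le_mul_of_nonneg_left (Real.rpow_le_rpow_of_nonpos hx ht.1 (by linarith))
      (by positivity)
  convert norm_trapezoid_sub_le (by linarith) hG hf hf' hbound using 1
  · rw [Complex.real_smul, add_sub_cancel_left, ← sub_div]
    congr 1
    push_cast
    ring
  · ring

/-- The right half-plane `-1 < re z` without the pole `1` of the Hurwitz zeta function, on which the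
first-order Euler–Maclaurin formula continues `∑ (s + n) ^ (-z)`. -/
def puncturedHalfPlane : Set ℂ := {z | -1 < z.re ∧ z ≠ 1}

theorem isOpen_puncturedHalfPlane : IsOpen puncturedHalfPlane :=
  (isOpen_lt continuous_const Complex.continuous_re).inter isOpen_ne

theorem zero_mem_puncturedHalfPlane : (0 : ℂ) ∈ puncturedHalfPlane := by
  simp [puncturedHalfPlane]

theorem mem_puncturedHalfPlane_of_one_lt_re {z : ℂ} (hz : 1 < z.re) : z ∈ puncturedHalfPlane :=
  ⟨by linarith, by rintro rfl; exact lt_irrefl _ hz⟩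

theorem isPreconnected_puncturedHalfPlane : IsPreconnected puncturedHalfPlane := by
  let upper : Set ℂ := {z | -1 < z.re} ∩ {z | z.re - z.im < 1}
  let lower : Set ℂ := {z | -1 < z.re} ∩ {z | z.re + z.im < 1}
  let right : Set ℂ := {z | 1 < z.re}
  have hupper : IsPreconnected upper :=
    ((convex_halfSpace_re_gt _).inter (convex_halfSpace_lt
      (Complex.reLm - Complex.imLm).isLinear 1)).isPreconnected
  have hlower : IsPreconnected lower :=
    ((convex_halfSpace_re_gt _).inter (convex_halfSpace_lt
      (Complex.reLm + Complex.imLm).isLinear 1)).isPreconnected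
  have hright : IsPreconnected right := (convex_halfSpace_re_gt 1).isPreconnected
  have hcover : puncturedHalfPlane = upper ∪ lower ∪ right := by
    ext z
    simp only [puncturedHalfPlane, upper, lower, right, Set.mem_union, Set.mem_inter_iff,
      Set.mem_ofPred_eq, ne_eq, Complex.ext_iff, Complex.one_re, Complex.one_im]
    grind
  rw [hcover]
  refine (hupper.union 0 ?_ ?_ hlower).union (2 + 2 * Complex.I) ?_ ?_ hright <;>
    norm_num [upper, lower, right]

theorem eqOn_puncturedHalfPlane {F G : ℂ → ℂ} (hF : DifferentiableOn ℂ F puncturedHalfPlane)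
    (hG : DifferentiableOn ℂ G puncturedHalfPlane) (h : ∀ z : ℂ, 1 < z.re → F z = G z) :
    Set.EqOn F G puncturedHalfPlane := by
  have hFG : F =ᶠ[𝓝 2] G := by
    filter_upwards [(isOpen_lt continuous_const Complex.continuous_re).mem_nhds
      (by norm_num : (2 : ℂ) ∈ {z : ℂ | 1 < z.re})] with z hz using h z hz
  exact (hF.analyticOnNhd isOpen_puncturedHalfPlane).eqOn_of_preconnected_of_eventuallyEq
    (hG.analyticOnNhd isOpen_puncturedHalfPlane) isPreconnected_puncturedHalfPlane
    (mem_puncturedHalfPlane_of_one_lt_re (by norm_num)) hFG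

/-- The `N`-th first-order Euler–Maclaurin approximation to the Hurwitz zeta function `ζ(z, s)`. Its
last term is the divergent part of `∫ t in 0..(s + N), t ^ (-z)`; at `z = 1` it has the junk value
`0`. -/
noncomputable def eulerMaclaurinSum (s : ℝ) (N : ℕ) (z : ℂ) : ℂ :=
  ∑ n ∈ Finset.range N, ((s + n : ℝ) : ℂ) ^ (-z) + ((s + N : ℝ) : ℂ) ^ (-z) / 2
    - ((s + N : ℝ) : ℂ) ^ (1 - z) / (1 - z)

section EulerMaclaurin

variable {s : ℝ}

theorem norm_eulerMaclaurinSum_succ_sub_le (hs : 0 < s) (N : ℕ) {z : ℂ} (hz : z ≠ 1)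
    (hre : -2 ≤ z.re) :
    ‖eulerMaclaurinSum s (N + 1) z - eulerMaclaurinSum s N z‖
      ≤ ‖z‖ * ‖z + 1‖ / 8 * (s + N) ^ (-z.re - 2) := by
  convert norm_trapezoid_cpow_sub_le (by positivity : 0 < s + N) hz hre using 2
  rw [eulerMaclaurinSum, eulerMaclaurinSum, Finset.sum_range_succ, Nat.cast_succ, ← add_assoc]
  ring

theorem summable_add_natCast_rpow_neg (hs : 0 < s) {a : ℝ} (ha : 1 < a) :
    Summable fun n : ℕ => (s + n) ^ (-a) := by
  refine ((Real.summable_one_div_nat_add_rpow s a).2 ha).congr fun n => ?_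
  have hn : 0 < s + n := by positivity
  rw [add_comm, abs_of_pos hn, Real.rpow_neg hn.le, one_div]

/-- The continuation of the Hurwitz zeta series `∑ (s + n) ^ (-z)`, as the limit of its
Euler–Maclaurin sums; meaningful on `puncturedHalfPlane`. -/
noncomputable def hurwitzContinuation (s : ℝ) (z : ℂ) : ℂ :=
  limUnder atTop fun N => eulerMaclaurinSum s N z

theorem tendstoUniformlyOn_eulerMaclaurinSum (hs : 0 < s) {c R : ℝ} (hc : -1 < c) {K : Set ℂ}
    (hK : ∀ z ∈ K, z ≠ 1 ∧ c ≤ z.re ∧ ‖z‖ ≤ R) :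
    TendstoUniformlyOn (eulerMaclaurinSum s) (hurwitzContinuation s) atTop K := by
  have hsum : Summable fun n : ℕ => R * (R + 1) / 8 * (s + n) ^ (-(c + 2)) :=
    (summable_add_natCast_rpow_neg hs (by linarith)).mul_left _
  have hbound : ∀ᶠ n : ℕ in atTop, ∀ z ∈ K,
      ‖eulerMaclaurinSum s (n + 1) z - eulerMaclaurinSum s n z‖
        ≤ R * (R + 1) / 8 * (s + n) ^ (-(c + 2)) := by
    filter_upwards [eventually_ge_atTop 1] with n hn z hz
    obtain ⟨hz1, hcz, hzR⟩ := hK z hz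
    have hn' : (1 : ℝ) ≤ n := by exact_mod_cast hn
    have hzR' : ‖z + 1‖ ≤ R + 1 := (norm_add_le z 1).trans (by rw [norm_one]; gcongr)
    have hR : 0 ≤ R := (norm_nonneg z).trans hzR
    refine (norm_eulerMaclaurinSum_succ_sub_le hs n hz1 (by linarith)).trans ?_
    gcongr
    · linarith
    · linarith
  have htsum := tendstoUniformlyOn_tsum_nat_eventually hsum hbound
  have hlim : TendstoUniformlyOn (eulerMaclaurinSum s) (fun z => eulerMaclaurinSum s 0 z +
      ∑' n, (eulerMaclaurinSum s (n + 1) z - eulerMaclaurinSum s n z)) atTop K := by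
    rw [Metric.tendstoUniformlyOn_iff] at htsum ⊢
    intro ε hε
    filter_upwards [htsum ε hε] with N hN z hz
    have := hN z hz
    rwa [Finset.sum_range_sub (fun n => eulerMaclaurinSum s n z), ← dist_add_left, add_sub_cancel]
      at this
  exact hlim.congr_right fun z hz => (hlim.tendsto_at hz).limUnder_eq.symm

theorem tendstoLocallyUniformlyOn_eulerMaclaurinSum (hs : 0 < s) :
    TendstoLocallyUniformlyOn (eulerMaclaurinSum s) (hurwitzContinuation s) atTop
      puncturedHalfPlane := by
  intro u hu w hw
  obtain ⟨c, hc, hcw⟩ := exists_between hw.1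
  refine ⟨puncturedHalfPlane ∩ ({z | c < z.re} ∩ Metric.ball 0 (‖w‖ + 1)),
    inter_mem_nhdsWithin _ (inter_mem ?_ ?_), ?_⟩
  · exact (isOpen_lt continuous_const Complex.continuous_re).mem_nhds hcw
  · exact Metric.isOpen_ball.mem_nhds (by simp)
  · refine tendstoUniformlyOn_eulerMaclaurinSum (R := ‖w‖ + 1) hs hc (fun z hz => ?_) u hu
    exact ⟨hz.1.2, hz.2.1.le, (mem_ball_zero_iff.1 hz.2.2).le⟩

theorem differentiableOn_eulerMaclaurinSum (hs : 0 < s) (N : ℕ) :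
    DifferentiableOn ℂ (eulerMaclaurinSum s N) puncturedHalfPlane := by
  intro z hz
  have hbase : ∀ n : ℕ, ((s + n : ℝ) : ℂ) ≠ 0 := fun n =>
    Complex.ofReal_ne_zero.2 (by positivity)
  have hz' : 1 - z ≠ 0 := sub_ne_zero.2 hz.2.symm
  have hpow : ∀ n : ℕ, DifferentiableAt ℂ (fun z : ℂ => ((s + n : ℝ) : ℂ) ^ (-z)) z := fun n =>
    differentiableAt_id.neg.const_cpow (Or.inl (hbase n))
  have hpow' : DifferentiableAt ℂ (fun z : ℂ => ((s + N : ℝ) : ℂ) ^ (1 - z)) z :=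
    (differentiableAt_id.const_sub 1).const_cpow (Or.inl (hbase N))
  exact (((DifferentiableAt.fun_sum fun n _ => hpow n).add ((hpow N).div_const 2)).sub
    (hpow'.div (differentiableAt_id.const_sub 1) hz')).differentiableWithinAt

theorem differentiableOn_hurwitzContinuation (hs : 0 < s) :
    DifferentiableOn ℂ (hurwitzContinuation s) puncturedHalfPlane :=
  (tendstoLocallyUniformlyOn_eulerMaclaurinSum hs).differentiableOn
    (.of_forall (differentiableOn_eulerMaclaurinSum hs)) isOpen_puncturedHalfPlane

theorem norm_ofReal_add_natCast_cpow (hs : 0 < s) (n : ℕ) (z : ℂ) :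
    ‖((s + n : ℝ) : ℂ) ^ z‖ = (s + n) ^ z.re :=
  Complex.norm_cpow_eq_rpow_re_of_pos (by positivity) z

theorem tendsto_ofReal_add_natCast_cpow_zero (hs : 0 < s) {z : ℂ} (hz : z.re < 0) :
    Tendsto (fun N : ℕ => ((s + N : ℝ) : ℂ) ^ z) atTop (𝓝 0) := by
  rw [tendsto_zero_iff_norm_tendsto_zero]
  simp_rw [norm_ofReal_add_natCast_cpow hs]
  simpa only [neg_neg, Function.comp_def] using
    (tendsto_rpow_neg_atTop (neg_pos.2 hz)).comp
      (tendsto_atTop_add_const_left _ s tendsto_natCast_atTop_atTop)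

theorem hurwitzContinuation_eq_tsum (hs : 0 < s) {z : ℂ} (hz : 1 < z.re) :
    hurwitzContinuation s z = ∑' n : ℕ, ((s + n : ℝ) : ℂ) ^ (-z) := by
  have hsum : Summable fun n : ℕ => ((s + n : ℝ) : ℂ) ^ (-z) := by
    refine .of_norm ?_
    simp_rw [norm_ofReal_add_natCast_cpow hs]
    exact summable_add_natCast_rpow_neg hs hz
  have hhalf : Tendsto (fun N : ℕ => ((s + N : ℝ) : ℂ) ^ (-z) / 2) atTop (𝓝 (0 / 2)) :=
    (tendsto_ofReal_add_natCast_cpow_zero hs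
      (by rw [Complex.neg_re]; linarith)).div_const 2
  have hint : Tendsto (fun N : ℕ => ((s + N : ℝ) : ℂ) ^ (1 - z) / (1 - z)) atTop
      (𝓝 (0 / (1 - z))) :=
    (tendsto_ofReal_add_natCast_cpow_zero hs
      (by rw [Complex.sub_re, Complex.one_re]; linarith)).div_const _
  refine Tendsto.limUnder_eq ?_
  simpa only [eulerMaclaurinSum, zero_div, add_zero, sub_zero] using
    (hsum.hasSum.tendsto_sum_nat.add hhalf).sub hint

theorem hurwitzContinuation_zero (hs : 0 < s) : hurwitzContinuation s 0 = 1 / 2 - s := by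
  have hconst : ∀ N, eulerMaclaurinSum s N 0 = 1 / 2 - s := by
    intro N
    simp only [eulerMaclaurinSum, neg_zero, Complex.cpow_zero, Finset.sum_const, Finset.card_range,
      nsmul_eq_mul, mul_one, sub_zero, Complex.cpow_one, div_one]
    push_cast
    ring
  have hlim := (tendstoLocallyUniformlyOn_eulerMaclaurinSum hs).tendsto_at
    zero_mem_puncturedHalfPlane
  simp_rw [hconst] at hlim
  exact tendsto_nhds_unique hlim tendsto_const_nhds

theorem deriv_eulerMaclaurinSum_zero (hs : 0 < s) (N : ℕ) :
    deriv (eulerMaclaurinSum s N) 0 =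
      ((-∑ n ∈ Finset.range N, Real.log (s + n) - Real.log (s + N) / 2
        + ((s + N) * Real.log (s + N) - (s + N)) : ℝ) : ℂ) := by
  have hbase : ∀ n : ℕ, ((s + n : ℝ) : ℂ) ≠ 0 := fun n =>
    Complex.ofReal_ne_zero.2 (by positivity)
  have hlog : ∀ n : ℕ, Complex.log ((s + n : ℝ) : ℂ) = (Real.log (s + n) : ℂ) := fun n =>
    (Complex.ofReal_log (by positivity)).symm
  have hpow : ∀ n : ℕ, HasDerivAt (fun z : ℂ => ((s + n : ℝ) : ℂ) ^ (-z))
      (-(Real.log (s + n) : ℂ)) 0 := fun n =>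
    ((hasDerivAt_neg 0).const_cpow (Or.inl (hbase n))).congr_deriv (by rw [hlog]; simp)
  have hpow' : HasDerivAt (fun z : ℂ => ((s + N : ℝ) : ℂ) ^ (1 - z))
      (-((s + N : ℝ) * Real.log (s + N) : ℂ)) 0 :=
    (((hasDerivAt_id 0).const_sub 1).const_cpow (Or.inl (hbase N))).congr_deriv
      (by rw [hlog]; simp)
  have hden : HasDerivAt (fun z : ℂ => 1 - z) (-1) 0 := (hasDerivAt_id 0).const_sub 1
  have h := ((HasDerivAt.fun_sum fun n (_ : n ∈ Finset.range N) => hpow n).add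
    ((hpow N).div_const 2)).sub (hpow'.div hden (by norm_num))
  refine (h.congr_deriv ?_).deriv
  simp only [sub_zero, Complex.cpow_one, Finset.sum_neg_distrib]
  push_cast
  ring

end EulerMaclaurin

theorem tendsto_log_factorial_sub_atTop :
    Tendsto (fun N : ℕ => Real.log (N.factorial) - (N * Real.log N - N) - Real.log N / 2) atTop
      (𝓝 (Real.log (2 * Real.pi) / 2)) := by
  have hstirling := (Stirling.tendsto_stirlingSeq_sqrt_pi.log (by positivity)).add_const
    (Real.log 2 / 2)
  have hlim : Real.log √Real.pi + Real.log 2 / 2 = Real.log (2 * Real.pi) / 2 := by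
    rw [Real.log_sqrt Real.pi_pos.le, Real.log_mul two_ne_zero Real.pi_ne_zero]
    ring
  rw [hlim] at hstirling
  refine hstirling.congr' ?_
  filter_upwards [eventually_ne_atTop 0] with N hN
  have hN' : (N : ℝ) ≠ 0 := Nat.cast_ne_zero.2 hN
  rw [Stirling.log_stirlingSeq_formula, Real.log_mul two_ne_zero hN',
    Real.log_div hN' (Real.exp_ne_zero _), Real.log_exp]
  ring

theorem tendsto_natCast_add_mul_log_sub_log_atTop (s c : ℝ) :
    Tendsto (fun N : ℕ => (N + c) * (Real.log (N + s) - Real.log N)) atTop (𝓝 s) := by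
  have hmain : Tendsto (fun x : ℝ => x * (Real.log (x + s) - Real.log x)) atTop (𝓝 s) := by
    refine (Real.tendsto_mul_log_one_add_div_atTop s).congr' ?_
    filter_upwards [eventually_gt_atTop 0, eventually_gt_atTop (-s)] with x hx hxs
    rw [← Real.log_div (by linarith) hx.ne', add_div, div_self hx.ne']
  have h := hmain.add ((Real.tendsto_log_comp_add_sub_log s).const_mul c)
  rw [mul_zero, add_zero] at h
  simp_rw [add_mul]
  exact h.comp tendsto_natCast_atTop_atTop

section Lerch

variable {s : ℝ}

theorem tendsto_neg_sum_log_add_sub_atTop (hs : 0 < s) :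
    Tendsto (fun N : ℕ => -∑ n ∈ Finset.range N, Real.log (s + n) - Real.log (s + N) / 2
      + ((s + N) * Real.log (s + N) - (s + N))) atTop
      (𝓝 (Real.log (Real.Gamma s) - Real.log (2 * Real.pi) / 2)) := by
  have h := (((Real.BohrMollerup.tendsto_log_gamma hs).sub tendsto_log_factorial_sub_atTop).add
    (tendsto_natCast_add_mul_log_sub_log_atTop s (s + 1 / 2))).sub_const s
  rw [add_sub_cancel_right] at h
  refine h.congr fun N => ?_
  rw [Real.BohrMollerup.logGammaSeq, Finset.sum_range_succ, add_comm (N : ℝ) s]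
  ring

theorem deriv_hurwitzContinuation_zero (hs : 0 < s) :
    deriv (hurwitzContinuation s) 0 =
      ((Real.log (Real.Gamma s) - Real.log (2 * Real.pi) / 2 : ℝ) : ℂ) := by
  have hderiv := ((tendstoLocallyUniformlyOn_eulerMaclaurinSum hs).deriv
    (.of_forall (differentiableOn_eulerMaclaurinSum hs)) isOpen_puncturedHalfPlane).tendsto_at
    zero_mem_puncturedHalfPlane
  simp_rw [Function.comp_apply, deriv_eulerMaclaurinSum_zero hs] at hderiv
  exact tendsto_nhds_unique hderiv
    ((Complex.continuous_ofReal.tendsto _).comp (tendsto_neg_sum_log_add_sub_atTop hs))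

theorem tsum_mul_div_cpow_neg_eq_mul_hurwitzContinuation (hs : 0 < s) {a : ℝ} (ha : 0 < a) (m : ℂ)
    {z : ℂ} (hz : 1 < z.re) :
    ∑' n : ℕ, m * (((s + n) / a : ℝ) : ℂ) ^ (-z) =
      m * ((a : ℂ) ^ z * hurwitzContinuation s z) := by
  have hterm : ∀ n : ℕ, (((s + n) / a : ℝ) : ℂ) ^ (-z) =
      (a : ℂ) ^ z * ((s + n : ℝ) : ℂ) ^ (-z) := by
    intro n
    rw [Complex.ofReal_div, Complex.div_cpow_ofReal_nonneg (by positivity) ha.le,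
      Complex.cpow_neg (a : ℂ) z, div_inv_eq_mul, mul_comm]
  simp_rw [hterm, tsum_mul_left, hurwitzContinuation_eq_tsum hs hz]

theorem deriv_zero_of_eq_tsum_div_cpow_neg (hs : 0 < s) {a : ℝ} (ha : 0 < a) (m : ℂ) {F : ℂ → ℂ}
    (hF : DifferentiableOn ℂ F puncturedHalfPlane)
    (hser : ∀ z : ℂ, 1 < z.re → F z = ∑' n : ℕ, m * (((s + n) / a : ℝ) : ℂ) ^ (-z)) :
    deriv F 0 = m * ((Real.log (Real.Gamma s) - Real.log (2 * Real.pi) / 2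
      + (1 / 2 - s) * Real.log a : ℝ) : ℂ) := by
  have ha' : (a : ℂ) ≠ 0 := Complex.ofReal_ne_zero.2 ha.ne'
  have hnhds := isOpen_puncturedHalfPlane.mem_nhds zero_mem_puncturedHalfPlane
  have hzeta := differentiableOn_hurwitzContinuation hs
  have hpow : Differentiable ℂ fun z : ℂ => (a : ℂ) ^ z := fun z =>
    differentiableAt_id.const_cpow (Or.inl ha')
  have heq : Set.EqOn F (fun z => m * ((a : ℂ) ^ z * hurwitzContinuation s z))
      puncturedHalfPlane :=
    eqOn_puncturedHalfPlane hF ((hpow.differentiableOn.mul hzeta).const_mul m) fun z hz =>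
      (hser z hz).trans (tsum_mul_div_cpow_neg_eq_mul_hurwitzContinuation hs ha m hz)
  have hderiv : HasDerivAt (fun z : ℂ => m * ((a : ℂ) ^ z * hurwitzContinuation s z)) _ 0 :=
    (((hasDerivAt_id (0 : ℂ)).const_cpow (Or.inl ha')).mul
      (hzeta.differentiableAt hnhds).hasDerivAt).const_mul m
  rw [(heq.eventuallyEq_of_mem hnhds).deriv_eq, hderiv.deriv, hurwitzContinuation_zero hs,
    deriv_hurwitzContinuation_zero hs, ← Complex.ofReal_log ha.le]
  simp only [id, Complex.cpow_zero]
  push_cast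
  ring

end Lerch

theorem ofReal_cpow_neg_mul_Gamma_eq_exp {a s : ℝ} (ha : 0 < a) (hs : 0 < s) :
    (a : ℂ) ^ (-(s : ℂ)) * Complex.Gamma s =
      Complex.exp ((Real.log (Real.Gamma s) - s * Real.log a : ℝ) : ℂ) := by
  rw [← Complex.ofReal_exp, Real.exp_sub, Real.exp_log (Real.Gamma_pos_of_pos hs),
    mul_comm s, ← Real.rpow_def_of_pos ha, Complex.Gamma_ofReal, ← Complex.ofReal_neg,
    ← Complex.ofReal_cpow ha.le, ← Complex.ofReal_mul, Real.rpow_neg ha.le, div_eq_inv_mul]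

/-- the zeta-regularized determinant of `(s − Φ)/(2π)`, where `Φ` has eigenvalue
`−n` with multiplicity `2g` for each `n ≥ 0`, equals the inverse of the archimedean local
`L`-factor `Γ_ℂ(s)^{2g} = ((2π)^{−s} Γ(s))^{2g}` of a genus-`g` curve at a complex place. -/
theorem stmt17 (g : ℕ) (hg : 1 ≤ g) (s : ℝ) (hs : 0 < s) (F : ℂ → ℂ)
    (hF : ∀ z : ℂ, z ≠ 1 → DifferentiableAt ℂ F z)
    (habs : ∀ z : ℂ, 1 < z.re →
      Summable fun n : ℕ => ‖(2 * (g : ℂ)) * ((((s + n) / (2 * Real.pi) : ℝ)) : ℂ) ^ (-z)‖)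
    (hser : ∀ z : ℂ, 1 < z.re →
      F z = ∑' n : ℕ, (2 * (g : ℂ)) * ((((s + n) / (2 * Real.pi) : ℝ)) : ℂ) ^ (-z)) :
    Complex.exp (-(deriv F 0)) =
      (((2 * Real.pi : ℝ) : ℂ) ^ (-(s : ℂ)) * Complex.Gamma (s : ℂ)) ^ (-(2 * (g : ℤ))) := by
  have hpi : 0 < 2 * Real.pi := Real.two_pi_pos
  have hderiv : deriv F 0 =
      2 * g * ((Real.log (Real.Gamma s) - s * Real.log (2 * Real.pi) : ℝ) : ℂ) := by
    rw [deriv_zero_of_eq_tsum_div_cpow_neg hs hpi (2 * g)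
      (fun z hz => (hF z hz.2).differentiableWithinAt) hser]
    push_cast
    ring
  rw [hderiv, ofReal_cpow_neg_mul_Gamma_eq_exp hpi hs, ← Complex.exp_int_mul]
  push_cast
  ring_nf
end
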